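/- arXiv:2006.06631 — 9 statements merged into one kernel-verified Lean document; each statement's English description precedes it below -/
import Mathlib

section
/- Let L₁, …, L₁₀ be ten pairwise distinct complex lines in ℂ² such that every pair L_i, L_j (i ≠ j) has nonempty intersection, and suppose there exist points a, b, c, A, B, C, p, q, r ∈ ℂ² with a ∈ L₁ ∩ L₃ ∩ L₄, b ∈ L₁ ∩ L₅ ∩ L₆, c ∈ L₁ ∩ L₇ ∩ L₈, A ∈ L₂ ∩ L₅ ∩ L₇, B ∈ L₂ ∩ L₃ ∩ L₈, C ∈ L₂ ∩ L₄ ∩ L₆ ∩ L₉, p ∈ L₃ ∩ L₅ ∩ L₁₀, q ∈ L₄ ∩ L₇ ∩ L₁₀, and r ∈ L₈ ∩ L₉ ∩ L₁₀. Then all ten lines are concurrent, i.e., there is a single point lying on every L_i. (This says the modified Pappus pseudoline arrangement 𝒫 is 'unexpected': the only complex line arrangements satisfying all its incidence relations are pencils.) -/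
/-- A complex affine line in `ℂ²`: a complex affine subspace of complex dimension 1,
i.e. a set of the form `{p + t • d : t ∈ ℂ}` with `d ≠ 0`. -/
def IsComplexLine (L : Set (ℂ × ℂ)) : Prop :=
  ∃ p d : ℂ × ℂ, d ≠ 0 ∧ L = {q | ∃ t : ℂ, q = p + t • d}

/-- A complex line consists of the affine combinations of any two of its distinct points. -/
theorem IsComplexLine.mem_iff {L : Set (ℂ × ℂ)} (hL : IsComplexLine L) {x y : ℂ × ℂ}
    (hx : x ∈ L) (hy : y ∈ L) (hxy : x ≠ y) (z : ℂ × ℂ) :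
    z ∈ L ↔ ∃ t : ℂ, z = x + t • (y - x) := by
  obtain ⟨p, d, -, rfl⟩ := hL
  obtain ⟨s, rfl⟩ := hx
  obtain ⟨t, rfl⟩ := hy
  have hst : t - s ≠ 0 := fun h => hxy (by rw [sub_eq_zero.mp h])
  constructor
  · rintro ⟨w, rfl⟩
    refine ⟨(w - s) / (t - s), ?_⟩
    have hw : w = s + (w - s) / (t - s) * (t - s) := by field_simp; ring
    nth_rewrite 1 [hw]
    module
  · rintro ⟨w, rfl⟩
    exact ⟨s + w * (t - s), by module⟩

/-- Two complex lines sharing two distinct points are equal. -/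
theorem IsComplexLine.eq_of_mem {L M : Set (ℂ × ℂ)} (hL : IsComplexLine L)
    (hM : IsComplexLine M) {x y : ℂ × ℂ} (hxy : x ≠ y) (hxL : x ∈ L) (hyL : y ∈ L)
    (hxM : x ∈ M) (hyM : y ∈ M) : L = M :=
  Set.ext fun z => (hL.mem_iff hxL hyL hxy z).trans (hM.mem_iff hxM hyM hxy z).symm

/-- Pappus's theorem in coordinates: on the axes take the points `1, b, c` and `1, B, C`.
If `p` is the intersection of the lines `1B` and `b1`, `q` is the intersection of `1C` and `c1`,
and the point with coordinates `(1 - m) * c, m * B` of the line `cB` lies on `pq`, then it lies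
on the line `bC`. -/
theorem pappus_coordinates {K : Type*} [Field K] {b c B C s t s' t' m w : K}
    (hb : b ≠ 1) (hc : c ≠ 1) (hB : B ≠ 1)
    (hp₁ : 1 - s = (1 - t) * b) (hp₂ : s * B = t)
    (hq₁ : 1 - s' = (1 - t') * c) (hq₂ : s' * C = t')
    (hr₁ : (1 - m) * c = (1 - s) + w * ((1 - s') - (1 - s)))
    (hr₂ : m * B = s * B + w * (s' * C - s * B)) :
    C * ((1 - m) * c) + b * (m * B) = b * C := by
  subst hp₂ hq₂
  have hsD : s * (1 - b * B) = 1 - b := by linear_combination -hp₁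
  have hsE : s' * (1 - c * C) = 1 - c := by linear_combination -hq₁
  have hD : 1 - b * B ≠ 0 := by
    intro h
    rw [h, mul_zero] at hsD
    exact hb (sub_eq_zero.mp hsD.symm).symm
  have hE : 1 - c * C ≠ 0 := by
    intro h
    rw [h, mul_zero] at hsE
    exact hc (sub_eq_zero.mp hsE.symm).symm
  have hP : (C * (1 - s) + b * (s * B) - b * C) * ((1 - B) * (1 - c)) =
      (B * (1 - s) + c * (s * B) - c * B) * ((1 - C) * (1 - b)) := by
    refine mul_left_cancel₀ hD ?_
    linear_combination ((b * B - C) * ((1 - B) * (1 - c)) -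
      (c * B - B) * ((1 - C) * (1 - b))) * hsD
  have hQ : (C * (1 - s') + b * (s' * C) - b * C) * ((1 - B) * (1 - c)) =
      (B * (1 - s') + c * (s' * C) - c * B) * ((1 - C) * (1 - b)) := by
    refine mul_left_cancel₀ hE ?_
    linear_combination ((b * C - C) * ((1 - B) * (1 - c)) -
      (c * C - B) * ((1 - C) * (1 - b))) * hsE
  have hne : (1 - B) * (1 - c) ≠ 0 :=
    mul_ne_zero (sub_ne_zero.mpr hB.symm) (sub_ne_zero.mpr hc.symm)
  refine sub_eq_zero.mp ((mul_eq_zero.mp ?_).resolve_right hne)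
  linear_combination (1 - w) * hP + w * hQ +
    (C * ((1 - B) * (1 - c)) - B * ((1 - C) * (1 - b))) * hr₁ +
    (b * ((1 - B) * (1 - c)) - c * ((1 - C) * (1 - b))) * hr₂

/-- The modified Pappus pseudoline arrangement `𝒫` is unexpected: any arrangement of
ten pairwise distinct, pairwise intersecting complex lines in `ℂ²` satisfying all its
incidence relations must be a pencil (all ten lines are concurrent).
Here `L 0, …, L 9` stand for the lines `L₁, …, L₁₀`. -/
theorem unexpected_pappus_arrangement
    (L : Fin 10 → Set (ℂ × ℂ))
    (hline : ∀ i, IsComplexLine (L i))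
    (hdistinct : Function.Injective L)
    (hmeet : ∀ i j, i ≠ j → (L i ∩ L j).Nonempty)
    (a b c A B C p q r : ℂ × ℂ)
    (ha : a ∈ L 0 ∩ L 2 ∩ L 3)
    (hb : b ∈ L 0 ∩ L 4 ∩ L 5)
    (hc : c ∈ L 0 ∩ L 6 ∩ L 7)
    (hA : A ∈ L 1 ∩ L 4 ∩ L 6)
    (hB : B ∈ L 1 ∩ L 2 ∩ L 7)
    (hC : C ∈ L 1 ∩ L 3 ∩ L 5 ∩ L 8)
    (hp : p ∈ L 2 ∩ L 4 ∩ L 9)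
    (hq : q ∈ L 3 ∩ L 6 ∩ L 9)
    (hr : r ∈ L 7 ∩ L 8 ∩ L 9) :
    ∃ z : ℂ × ℂ, ∀ i, z ∈ L i := by
  have uniq : ∀ i j x y, i ≠ j → x ∈ L i → x ∈ L j → y ∈ L i → y ∈ L j → x = y := by
    intro i j x y hij hxi hxj hyi hyj
    by_contra hxy
    exact hij (hdistinct ((hline i).eq_of_mem (hline j) hxy hxi hyi hxj hyj))
  obtain ⟨O, hO0, hO1⟩ := hmeet 0 1 (by decide)
  by_contra hcon
  obtain ⟨⟨ha0, ha2⟩, ha3⟩ := ha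
  obtain ⟨⟨hb0, hb4⟩, hb5⟩ := hb
  obtain ⟨⟨hc0, hc6⟩, hc7⟩ := hc
  obtain ⟨⟨hA1, hA4⟩, hA6⟩ := hA
  obtain ⟨⟨hB1, hB2⟩, hB7⟩ := hB
  obtain ⟨⟨⟨hC1, hC3⟩, hC5⟩, hC8⟩ := hC
  obtain ⟨⟨hp2, hp4⟩, hp9⟩ := hp
  obtain ⟨⟨hq3, hq6⟩, hq9⟩ := hq
  obtain ⟨⟨hr7, hr8⟩, hr9⟩ := hr
  have not_pencil : ∀ z, ¬ (z ∈ L 0 ∧ z ∈ L 1 ∧ z ∈ L 2 ∧ z ∈ L 3 ∧ z ∈ L 4 ∧ z ∈ L 5 ∧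
      z ∈ L 6 ∧ z ∈ L 7 ∧ z ∈ L 8 ∧ z ∈ L 9) := by
    rintro z ⟨h0, h1, h2, h3, h4, h5, h6, h7, h8, h9⟩
    refine hcon ⟨z, fun i => ?_⟩
    fin_cases i <;> assumption
  have absorb : ∀ {i j k x}, i ≠ j ∧ i ≠ k ∧ j ≠ k → x ∈ L i → x ∈ L j → x ∈ L k → ∀ z,
      z ∈ L i ∧ z ∈ L j ∨ z ∈ L i ∧ z ∈ L k ∨ z ∈ L j ∧ z ∈ L k →
        z ∈ L i ∧ z ∈ L j ∧ z ∈ L k := by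
    rintro i j k x ⟨hij, hik, hjk⟩ hi hj hk z (⟨h, h'⟩ | ⟨h, h'⟩ | ⟨h, h'⟩)
    · obtain rfl := uniq i j x z hij hi hj h h'
      exact ⟨hi, hj, hk⟩
    · obtain rfl := uniq i k x z hik hi hk h h'
      exact ⟨hi, hj, hk⟩
    · obtain rfl := uniq j k x z hjk hj hk h h'
      exact ⟨hi, hj, hk⟩
  have saturate := fun z =>
    And.intro (absorb (by decide) ha0 ha2 ha3 z) <|
    And.intro (absorb (by decide) hb0 hb4 hb5 z) <|
    And.intro (absorb (by decide) hc0 hc6 hc7 z) <|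
    And.intro (absorb (by decide) hA1 hA4 hA6 z) <|
    And.intro (absorb (by decide) hB1 hB2 hB7 z) <|
    And.intro (absorb (by decide) hC1 hC3 hC5 z) <|
    And.intro (absorb (by decide) hC1 hC3 hC8 z) <|
    And.intro (absorb (by decide) hC1 hC5 hC8 z) <|
    And.intro (absorb (by decide) hp2 hp4 hp9 z) <|
    And.intro (absorb (by decide) hq3 hq6 hq9 z) <|
    absorb (by decide) hr7 hr8 hr9 z
  have hab : a ≠ b := fun h => not_pencil a (by grind only [saturate a])
  have hac : a ≠ c := fun h => not_pencil a (by grind only [saturate a])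
  have hAB : A ≠ B := fun h => not_pencil A (by grind only [saturate A])
  have haB : a ≠ B := fun h => not_pencil a (by grind only [saturate a])
  have hbA : b ≠ A := fun h => not_pencil b (by grind only [saturate b])
  have haC : a ≠ C := fun h => not_pencil a (by grind only [saturate a])
  have hcA : c ≠ A := fun h => not_pencil c (by grind only [saturate c])
  have hcB : c ≠ B := fun h => not_pencil c (by grind only [saturate c])
  have hpq : p ≠ q := fun h => not_pencil p (by grind only [saturate p])
  have hbC : b ≠ C := fun h => not_pencil b (by grind only [saturate b])
  have hOa : O ≠ a := fun h => not_pencil O (by grind only [saturate O])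
  have hOA : O ≠ A := fun h => not_pencil O (by grind only [saturate O])
  have hOb : O ≠ b := fun h => not_pencil O (by grind only [saturate O])
  have hCr : C ≠ r := fun h => not_pencil C (by grind only [saturate C])
  have indep : ∀ x y x' y' : ℂ, x • (a - O) + y • (A - O) = x' • (a - O) + y' • (A - O) →
      x = x' ∧ y = y' := by
    intro x y x' y' h
    have hy : y = y' := by
      by_contra hyy
      have hyy' : y - y' ≠ 0 := sub_ne_zero.mpr hyy
      have hA0 : A ∈ L 0 := by
        refine ((hline 0).mem_iff hO0 ha0 hOa A).mpr ⟨(y - y')⁻¹ * (x' - x), ?_⟩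
        have h' : (y - y') • (A - O) = (x' - x) • (a - O) := by
          linear_combination (norm := module) h
        rw [mul_smul, ← h', inv_smul_smul₀ hyy']
        abel
      exact hOA (uniq 0 1 O A (by decide) hO0 hO1 hA0 hA1)
    subst hy
    exact ⟨smul_left_injective ℂ (sub_ne_zero.mpr hOa.symm) (add_right_cancel h), rfl⟩
  obtain ⟨β, hβ⟩ := ((hline 0).mem_iff hO0 ha0 hOa b).mp hb0
  obtain ⟨γ, hγ⟩ := ((hline 0).mem_iff hO0 ha0 hOa c).mp hc0
  obtain ⟨β', hβ'⟩ := ((hline 1).mem_iff hO1 hA1 hOA B).mp hB1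
  obtain ⟨γ', hγ'⟩ := ((hline 1).mem_iff hO1 hA1 hOA C).mp hC1
  obtain ⟨s, hs⟩ := ((hline 2).mem_iff ha2 hB2 haB p).mp hp2
  obtain ⟨t, ht⟩ := ((hline 4).mem_iff hb4 hA4 hbA p).mp hp4
  obtain ⟨s', hs'⟩ := ((hline 3).mem_iff ha3 hC3 haC q).mp hq3
  obtain ⟨t', ht'⟩ := ((hline 6).mem_iff hc6 hA6 hcA q).mp hq6
  obtain ⟨m, hm⟩ := ((hline 7).mem_iff hc7 hB7 hcB r).mp hr7
  obtain ⟨w, hw⟩ := ((hline 9).mem_iff hp9 hq9 hpq r).mp hr9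
  have hβ0 : β ≠ 0 := by
    rintro rfl
    exact hOb (by simpa using hβ.symm)
  have hβ1 : β ≠ 1 := by
    rintro rfl
    exact hab (by simpa using hβ.symm)
  have hγ1 : γ ≠ 1 := by
    rintro rfl
    exact hac (by simpa using hγ.symm)
  have hβ'1 : β' ≠ 1 := by
    rintro rfl
    exact hAB (by simpa using hβ'.symm)
  have ep := indep (1 - s) (s * β') ((1 - t) * β) t (by
    rw [hβ'] at hs
    rw [hβ] at ht
    linear_combination (norm := module) ht - hs)
  have eq := indep (1 - s') (s' * γ') ((1 - t') * γ) t' (by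
    rw [hγ'] at hs'
    rw [hγ] at ht'
    linear_combination (norm := module) ht' - hs')
  have er := indep ((1 - m) * γ) (m * β') ((1 - s) + w * ((1 - s') - (1 - s)))
    (s * β' + w * (s' * γ' - s * β')) (by
    rw [hs, hs', hβ', hγ'] at hw
    rw [hγ, hβ'] at hm
    linear_combination (norm := module) hw - hm)
  have key := pappus_coordinates hβ1 hγ1 hβ'1 ep.1 ep.2 eq.1 eq.2 er.1 er.2
  have hr5 : r ∈ L 5 := by
    refine ((hline 5).mem_iff hb5 hC5 hbC r).mpr ⟨1 - (1 - m) * γ / β, ?_⟩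
    have h₁ : (1 - m) * γ = (1 - (1 - (1 - m) * γ / β)) * β := by field_simp; ring
    have h₂ : m * β' = (1 - (1 - m) * γ / β) * γ' := by
      field_simp
      linear_combination key
    rw [hm, hγ, hβ', hβ, hγ']
    linear_combination (norm := module) h₁ • (a - O) + h₂ • (A - O)
  exact hCr (uniq 5 8 C r (by decide) hC5 hC8 hr5 hr8)
end

section
/- Let L₀, L₁, …, L₁₀ be eleven pairwise distinct complex lines in ℂ² such that every pair L_i, L_j (i ≠ j) has nonempty intersection, and suppose there exist points V, H, P, s₁, s₂, s₃, s₄, a′, b, c ∈ ℂ² with V ∈ L₀ ∩ L₁ ∩ L₂ ∩ L₃ ∩ L₄, H ∈ L₀ ∩ L₅ ∩ L₆ ∩ L₇, P ∈ L₀ ∩ L₈ ∩ L₉, s₁ ∈ L₂ ∩ L₆ ∩ L₈, s₂ ∈ L₃ ∩ L₅ ∩ L₈, s₃ ∈ L₂ ∩ L₇ ∩ L₉, s₄ ∈ L₄ ∩ L₅ ∩ L₉, a′ ∈ L₁ ∩ L₅ ∩ L₁₀, b ∈ L₃ ∩ L₆ ∩ L₁₀, and c ∈ L₄ ∩ L₇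 ∩ L₁₀. Then all eleven lines are concurrent. (This says the pseudoline arrangement 𝒬, consisting of four concurrent 'vertical' lines, three concurrent 'horizontal' lines, two diagonals, the line at infinity, and a bent pseudoline through a′, b, c, is 'unexpected': the only complex line arrangements satisfying all its incidence relations are pencils.) -/
/-- The affine function on `ℂ²` with coefficients `p`, `q` and constant term `r`. -/
def affineForm (p q r : ℂ) (z : ℂ × ℂ) : ℂ := p * z.1 + q * z.2 + r

theorem IsComplexLine.exists_affineForm {L : Set (ℂ × ℂ)} (hL : IsComplexLine L) :
    ∃ p q r : ℂ, (p ≠ 0 ∨ q ≠ 0) ∧ ∀ z, z ∈ L ↔ affineForm p q r z = 0 := by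
  obtain ⟨⟨x, y⟩, ⟨u, v⟩, hd, rfl⟩ := hL
  refine ⟨v, -u, u * y - v * x, ?_, ?_⟩
  · by_contra! h
    exact hd (Prod.ext (neg_eq_zero.mp h.2) h.1)
  · rintro ⟨z, w⟩
    simp only [Set.mem_ofPred_eq, affineForm, Prod.ext_iff, Prod.fst_add, Prod.snd_add,
      Prod.smul_fst, Prod.smul_snd, smul_eq_mul]
    constructor
    · rintro ⟨t, h₁, h₂⟩
      rw [h₁, h₂]
      ring
    · intro h
      by_cases hu : u = 0
      · have hv : v ≠ 0 := fun hv => hd (Prod.ext hu hv)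
        subst hu
        refine ⟨(w - y) / v, ?_, by field_simp; ring⟩
        have : v * (z - x) = 0 := by linear_combination h
        linear_combination (mul_eq_zero.mp this).resolve_left hv
      · refine ⟨(z - x) / u, by field_simp; ring, ?_⟩
        field_simp
        linear_combination -h

theorem IsComplexLine.eq_of_mem_of_mem {L M : Set (ℂ × ℂ)} (hL : IsComplexLine L)
    (hM : IsComplexLine M) {z w : ℂ × ℂ} (hzw : z ≠ w) (hzL : z ∈ L) (hwL : w ∈ L)
    (hzM : z ∈ M) (hwM : w ∈ M) : L = M := by
  have key : ∀ {K : Set (ℂ × ℂ)}, IsComplexLine K → z ∈ K → w ∈ K →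
      K = {x | ∃ t : ℂ, x = z + t • (w - z)} := by
    rintro K ⟨p, d, -, rfl⟩ ⟨s, rfl⟩ ⟨t, rfl⟩
    have hst : t - s ≠ 0 := fun h => hzw (by rw [sub_eq_zero.mp h])
    ext x
    constructor
    · rintro ⟨a, rfl⟩
      refine ⟨(a - s) / (t - s), ?_⟩
      ext <;> simp <;> field_simp <;> ring
    · rintro ⟨a, rfl⟩
      refine ⟨s + a * (t - s), ?_⟩
      ext <;> simp <;> ring
  rw [key hL hzL hwL, key hM hzM hwM]

theorem IsComplexLine.eq_of_subset {L M : Set (ℂ × ℂ)} (hL : IsComplexLine L)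
    (hM : IsComplexLine M) (h : L ⊆ M) : L = M := by
  have hL' := hL
  obtain ⟨p, d, hd, rfl⟩ := hL'
  have hp : p ∈ {q | ∃ t : ℂ, q = p + t • d} := ⟨0, by simp⟩
  have hq : p + d ∈ {q | ∃ t : ℂ, q = p + t • d} := ⟨1, by simp⟩
  exact hL.eq_of_mem_of_mem hM (by simpa using hd) hp hq (h hp) (h hq)

/-- An affine function vanishing at the common point of two distinct lines is a combination
of equations of these lines. -/
theorem exists_affineForm_eq_combination {L M : Set (ℂ × ℂ)} (hL : IsComplexLine L)
    (hM : IsComplexLine M) (hLM : L ≠ M) {p q r p' q' r' : ℂ} (hpq : p ≠ 0 ∨ q ≠ 0)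
    (hfL : ∀ z, z ∈ L ↔ affineForm p q r z = 0) (hfM : ∀ z, z ∈ M ↔ affineForm p' q' r' z = 0)
    {V : ℂ × ℂ} (hVL : V ∈ L) (hVM : V ∈ M) {k l m : ℂ} (hV : affineForm k l m V = 0) :
    ∃ s t : ℂ, ∀ z, affineForm k l m z = s * affineForm p q r z + t * affineForm p' q' r' z := by
  have h₁ := (hfL V).mp hVL
  have h₂ := (hfM V).mp hVM
  have hdet : p * q' - q * p' ≠ 0 := by
    intro hdet
    refine hLM (hL.eq_of_subset hM fun z hz => (hfM z).mpr ?_)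
    have h₃ := (hfL z).mp hz
    simp only [affineForm] at h₁ h₂ h₃ ⊢
    rcases hpq with h | h <;> refine (mul_eq_zero.mp ?_).resolve_left h
    · linear_combination p' * h₃ - p' * h₁ + p * h₂ + (z.2 - V.2) * hdet
    · linear_combination q' * h₃ - q' * h₁ + q * h₂ - (z.1 - V.1) * hdet
  refine ⟨(k * q' - l * p') / (p * q' - q * p'), (p * l - q * k) / (p * q' - q * p'), fun z => ?_⟩
  rw [div_mul_eq_mul_div, div_mul_eq_mul_div, ← add_div, eq_div_iff hdet]
  simp only [affineForm] at h₁ h₂ hV ⊢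
  linear_combination (p * q' - q * p') * hV - (k * q' - l * p') * h₁ - (p * l - q * k) * h₂

/-- A third line of the pencil spanned by two lines `f = 0` and `g = 0` has an equation
`g = x * f` with `x ≠ 0`. -/
theorem exists_pencil_parameter {L M N : Set (ℂ × ℂ)} (hL : IsComplexLine L)
    (hM : IsComplexLine M) (hN : IsComplexLine N) (hLM : L ≠ M) (hLN : L ≠ N) (hMN : M ≠ N)
    {p q r p' q' r' : ℂ} (hpq : p ≠ 0 ∨ q ≠ 0)
    (hfL : ∀ z, z ∈ L ↔ affineForm p q r z = 0) (hfM : ∀ z, z ∈ M ↔ affineForm p' q' r' z = 0)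
    {V : ℂ × ℂ} (hVL : V ∈ L) (hVM : V ∈ M) (hVN : V ∈ N) :
    ∃ x : ℂ, x ≠ 0 ∧ ∀ z, z ∈ N ↔ affineForm p' q' r' z = x * affineForm p q r z := by
  obtain ⟨k, l, m, -, hfN⟩ := hN.exists_affineForm
  obtain ⟨s, t, hst⟩ := exists_affineForm_eq_combination hL hM hLM hpq hfL hfM hVL hVM
    ((hfN V).mp hVN)
  have ht : t ≠ 0 := by
    rintro rfl
    refine hLN (hL.eq_of_subset hN fun z hz => ?_)
    rw [hfN, hst, (hfL z).mp hz]
    ring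
  have hs : s ≠ 0 := by
    rintro rfl
    refine hMN (hM.eq_of_subset hN fun z hz => ?_)
    rw [hfN, hst, (hfM z).mp hz]
    ring
  refine ⟨-s / t, div_ne_zero (neg_ne_zero.mpr hs) ht, fun z => ?_⟩
  rw [hfN, hst]
  field_simp
  constructor <;> intro h <;> linear_combination h

/-- Every line has a nontrivial equation in terms of the equations of three lines
forming a triangle. -/
theorem exists_triangle_equation {L M K N : Set (ℂ × ℂ)} (hL : IsComplexLine L)
    (hM : IsComplexLine M) (hN : IsComplexLine N) (hLM : L ≠ M) (hLN : L ≠ N)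
    {p q r p' q' r' p'' q'' r'' : ℂ} (hpq : p ≠ 0 ∨ q ≠ 0)
    (hfL : ∀ z, z ∈ L ↔ affineForm p q r z = 0) (hfM : ∀ z, z ∈ M ↔ affineForm p' q' r' z = 0)
    (hfK : ∀ z, z ∈ K ↔ affineForm p'' q'' r'' z = 0)
    {V : ℂ × ℂ} (hVL : V ∈ L) (hVM : V ∈ M) (hVK : V ∉ K) :
    ∃ α β γ : ℂ, ¬(α = 0 ∧ β = 0 ∧ γ = 0) ∧ ∀ z ∈ N,
      α * affineForm p q r z + β * affineForm p' q' r' z + γ * affineForm p'' q'' r'' z = 0 := by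
  obtain ⟨k, l, m, -, hfN⟩ := hN.exists_affineForm
  rw [hfK] at hVK
  obtain ⟨c, hc⟩ : ∃ c, c = affineForm k l m V / affineForm p'' q'' r'' V := ⟨_, rfl⟩
  have hV : affineForm (k - c * p'') (l - c * q'') (m - c * r'') V = 0 := by
    have : affineForm k l m V - c * affineForm p'' q'' r'' V = 0 := by
      rw [hc]
      field_simp
      ring
    simp only [affineForm] at this ⊢
    linear_combination this
  obtain ⟨s, t, hst⟩ := exists_affineForm_eq_combination hL hM hLM hpq hfL hfM hVL hVM hV
  have h : ∀ z, affineForm k l m z =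
      s * affineForm p q r z + t * affineForm p' q' r' z + c * affineForm p'' q'' r'' z := by
    intro z
    have := hst z
    simp only [affineForm] at this ⊢
    linear_combination this
  refine ⟨s, t, c, ?_, fun z hz => by rw [← h, (hfN z).mp hz]⟩
  rintro ⟨rfl, rfl, rfl⟩
  refine hLN (hL.eq_of_subset hN fun z _ => ?_)
  rw [hfN, h]
  ring

/-- The pseudoline arrangement `𝒬` of the paper is unexpected: any arrangement of
eleven pairwise distinct and pairwise intersecting complex lines `L 0, …, L 10`
(standing for `L₀, …, L₁₀`) in `ℂ²` satisfying all the incidence relations of `𝒬`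
must be a pencil (all eleven lines are concurrent). -/
theorem unexpected_orevkov_arrangement
    (L : Fin 11 → Set (ℂ × ℂ))
    (hline : ∀ i, IsComplexLine (L i))
    (hdistinct : Function.Injective L)
    (hmeet : ∀ i j, i ≠ j → (L i ∩ L j).Nonempty)
    (V H P s₁ s₂ s₃ s₄ a' b c : ℂ × ℂ)
    (hV : V ∈ L 0 ∩ L 1 ∩ L 2 ∩ L 3 ∩ L 4)
    (hH : H ∈ L 0 ∩ L 5 ∩ L 6 ∩ L 7)
    (hP : P ∈ L 0 ∩ L 8 ∩ L 9)
    (hs₁ : s₁ ∈ L 2 ∩ L 6 ∩ L 8)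
    (hs₂ : s₂ ∈ L 3 ∩ L 5 ∩ L 8)
    (hs₃ : s₃ ∈ L 2 ∩ L 7 ∩ L 9)
    (hs₄ : s₄ ∈ L 4 ∩ L 5 ∩ L 9)
    (ha' : a' ∈ L 1 ∩ L 5 ∩ L 10)
    (hb : b ∈ L 3 ∩ L 6 ∩ L 10)
    (hc : c ∈ L 4 ∩ L 7 ∩ L 10) :
    ∃ z : ℂ × ℂ, ∀ i, z ∈ L i := by
  obtain ⟨⟨⟨⟨hV0, hV1⟩, hV2⟩, hV3⟩, hV4⟩ := hV
  obtain ⟨⟨⟨hH0, hH5⟩, hH6⟩, hH7⟩ := hH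
  obtain ⟨⟨hP0, hP8⟩, hP9⟩ := hP
  obtain ⟨⟨h12, h16⟩, h18⟩ := hs₁
  obtain ⟨⟨h23, h25⟩, h28⟩ := hs₂
  obtain ⟨⟨h32, h37⟩, h39⟩ := hs₃
  obtain ⟨⟨h44, h45⟩, h49⟩ := hs₄
  obtain ⟨⟨ha1, ha5⟩, ha10⟩ := ha'
  obtain ⟨⟨hb3, hb6⟩, hb10⟩ := hb
  obtain ⟨⟨hc4, hc7⟩, hc10⟩ := hc
  have ne : ∀ {i j : Fin 11}, i ≠ j → L i ≠ L j := fun hij h => hij (hdistinct h)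
  have uniq : ∀ {i j : Fin 11}, i ≠ j → ∀ {z w : ℂ × ℂ}, z ∈ L i → w ∈ L i → z ∈ L j →
      w ∈ L j → z = w := by
    intro i j hij z w h₁ h₂ h₃ h₄
    by_contra hzw
    exact ne hij ((hline i).eq_of_mem_of_mem (hline j) hzw h₁ h₂ h₃ h₄)
  by_cases hVH : V = H
  · subst hVH
    have e₁ := uniq (i := 2) (j := 6) (by decide) h12 hV2 h16 hH6
    have e₃ := uniq (i := 2) (j := 7) (by decide) h32 hV2 h37 hH7
    have e₅ := uniq (i := 1) (j := 5) (by decide) ha1 hV1 ha5 hH5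
    rw [e₁] at h18
    rw [e₃] at h39
    rw [e₅] at ha10
    refine ⟨V, fun i => ?_⟩
    fin_cases i <;> assumption
  exfalso
  have hV5 : V ∉ L 5 := fun h => hVH (uniq (i := 0) (j := 5) (by decide) hV0 hH0 h hH5)
  obtain ⟨p₀, q₀, r₀, hpq₀, f₀⟩ := (hline 0).exists_affineForm
  obtain ⟨p₂, q₂, r₂, -, f₂⟩ := (hline 2).exists_affineForm
  obtain ⟨p₅, q₅, r₅, -, f₅⟩ := (hline 5).exists_affineForm
  have vert : ∀ i : Fin 11, i ≠ 0 → i ≠ 2 → V ∈ L i → ∃ x : ℂ, x ≠ 0 ∧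
      ∀ z, z ∈ L i ↔ affineForm p₂ q₂ r₂ z = x * affineForm p₀ q₀ r₀ z := fun i h0 h2 hVi =>
    exists_pencil_parameter (hline 0) (hline 2) (hline i) (ne (by decide)) (ne h0.symm)
      (ne h2.symm) hpq₀ f₀ f₂ hV0 hV2 hVi
  have horiz : ∀ i : Fin 11, i ≠ 0 → i ≠ 5 → H ∈ L i → ∃ x : ℂ, x ≠ 0 ∧
      ∀ z, z ∈ L i ↔ affineForm p₅ q₅ r₅ z = x * affineForm p₀ q₀ r₀ z := fun i h0 h5 hHi =>
    exists_pencil_parameter (hline 0) (hline 5) (hline i) (ne (by decide)) (ne h0.symm)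
      (ne h5.symm) hpq₀ f₀ f₅ hH0 hH5 hHi
  obtain ⟨x₁, hx₁, f₁⟩ := vert 1 (by decide) (by decide) hV1
  obtain ⟨x₃, hx₃, f₃⟩ := vert 3 (by decide) (by decide) hV3
  obtain ⟨x₄, hx₄, f₄⟩ := vert 4 (by decide) (by decide) hV4
  obtain ⟨y₆, hy₆, f₆⟩ := horiz 6 (by decide) (by decide) hH6
  obtain ⟨y₇, hy₇, f₇⟩ := horiz 7 (by decide) (by decide) hH7
  have hx₃₄ : x₄ - x₃ ≠ 0 := by
    intro h
    refine ne (i := 3) (j := 4) (by decide) (Set.ext fun z => ?_)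
    rw [f₃, f₄, sub_eq_zero.mp h]
  have tri : ∀ i : Fin 11, i ≠ 0 → ∃ α β γ : ℂ, ¬(α = 0 ∧ β = 0 ∧ γ = 0) ∧ ∀ z ∈ L i,
      α * affineForm p₀ q₀ r₀ z + β * affineForm p₂ q₂ r₂ z + γ * affineForm p₅ q₅ r₅ z = 0 :=
    fun i hi => exists_triangle_equation (hline 0) (hline 2) (hline i) (ne (by decide))
      (ne hi.symm) hpq₀ f₀ f₂ f₅ hV0 hV2 hV5
  have no_common_zero : ∀ z, affineForm p₀ q₀ r₀ z = 0 → affineForm p₂ q₂ r₂ z = 0 →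
      affineForm p₅ q₅ r₅ z ≠ 0 := by
    intro z h₀ h₂ h₅
    have hz := uniq (i := 0) (j := 2) (by decide) ((f₀ z).mpr h₀) hV0 ((f₂ z).mpr h₂) hV2
    exact hV5 (hz ▸ (f₅ z).mpr h₅)
  -- Off `L 0`, a line equation may be evaluated in the affine coordinates `f₂ / f₀`, `f₅ / f₀`.
  have coord_eq : ∀ {α β γ x y : ℂ} {z : ℂ × ℂ},
      α * affineForm p₀ q₀ r₀ z + β * affineForm p₂ q₂ r₂ z + γ * affineForm p₅ q₅ r₅ z = 0 →
      affineForm p₂ q₂ r₂ z = x * affineForm p₀ q₀ r₀ z →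
      affineForm p₅ q₅ r₅ z = y * affineForm p₀ q₀ r₀ z → α + β * x + γ * y = 0 := by
    intro α β γ x y z h hx hy
    have h₀ : affineForm p₀ q₀ r₀ z ≠ 0 := fun h₀ =>
      no_common_zero z h₀ (by rw [hx, h₀, mul_zero]) (by rw [hy, h₀, mul_zero])
    refine (mul_eq_zero.mp ?_).resolve_left h₀
    linear_combination h - β * hx - γ * hy
  have zero₂ : ∀ {z}, z ∈ L 2 → affineForm p₂ q₂ r₂ z = 0 * affineForm p₀ q₀ r₀ z :=
    fun hz => by rw [(f₂ _).mp hz, zero_mul]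
  have zero₅ : ∀ {z}, z ∈ L 5 → affineForm p₅ q₅ r₅ z = 0 * affineForm p₀ q₀ r₀ z :=
    fun hz => by rw [(f₅ _).mp hz, zero_mul]
  obtain ⟨α, β, γ, hn, f₈⟩ := tri 8 (by decide)
  obtain ⟨α', β', γ', hn', f₉⟩ := tri 9 (by decide)
  obtain ⟨α'', β'', γ'', hn'', f₁₀⟩ := tri 10 (by decide)
  have e₁ := coord_eq (f₈ _ h18) (zero₂ h12) ((f₆ _).mp h16)
  have e₂ := coord_eq (f₈ _ h28) ((f₃ _).mp h23) (zero₅ h25)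
  have e₃ := coord_eq (f₉ _ h39) (zero₂ h32) ((f₇ _).mp h37)
  have e₄ := coord_eq (f₉ _ h49) ((f₄ _).mp h44) (zero₅ h45)
  have ea := coord_eq (f₁₀ _ ha10) ((f₁ _).mp ha1) (zero₅ ha5)
  have eb := coord_eq (f₁₀ _ hb10) ((f₃ _).mp hb3) ((f₆ _).mp hb6)
  have ec := coord_eq (f₁₀ _ hc10) ((f₄ _).mp hc4) ((f₇ _).mp hc7)
  have hα : α ≠ 0 := by
    rintro rfl
    exact hn ⟨rfl, by simpa [hx₃] using e₂, by simpa [hy₆] using e₁⟩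
  have hα' : α' ≠ 0 := by
    rintro rfl
    exact hn' ⟨rfl, by simpa [hx₄] using e₄, by simpa [hy₇] using e₃⟩
  have hparallel : β * γ' - β' * γ = 0 := by
    have h₀ := (f₀ P).mp hP0
    have h₈ := f₈ P hP8
    have h₉ := f₉ P hP9
    rw [h₀] at h₈ h₉
    by_contra hdet
    refine no_common_zero P h₀ ?_ ?_ <;> refine (mul_eq_zero.mp ?_).resolve_left hdet
    · linear_combination γ' * h₈ - γ * h₉
    · linear_combination β * h₉ - β' * h₈
  have hslope : x₃ * y₇ - x₄ * y₆ = 0 := by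
    refine (mul_eq_zero.mp ?_).resolve_left (mul_ne_zero hα hα')
    have hβ : β * x₃ = -α := by linear_combination e₂
    have hγ : γ * y₆ = -α := by linear_combination e₁
    have hβ' : β' * x₄ = -α' := by linear_combination e₄
    have hγ' : γ' * y₇ = -α' := by linear_combination e₃
    linear_combination -x₃ * x₄ * y₆ * y₇ * hparallel +
      x₄ * y₆ * (γ' * y₇ * hβ - α * hγ') - x₃ * y₇ * (γ * y₆ * hβ' - α' * hγ)
  have hα'' : α'' = 0 := by
    refine (mul_eq_zero.mp ?_).resolve_right hx₃₄
    linear_combination x₄ * eb - x₃ * ec + γ'' * hslope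
  subst hα''
  have hβ'' : β'' = 0 := by simpa [hx₁] using ea
  subst hβ''
  exact hn'' ⟨rfl, rfl, by simpa [hy₆] using eb⟩
end

section
/- Let L₀, L₂, L₃, L₄, L₅, L₆, L₇, L₈, L₉ be pairwise distinct lines in the complex projective plane ℙ²(ℂ). Suppose there are points V ∈ L₀ ∩ L₂ ∩ L₃ ∩ L₄, H ∈ L₀ ∩ L₅ ∩ L₆ ∩ L₇, and P ∈ L₀ ∩ L₈ ∩ L₉ with V, H, P pairwise distinct; suppose L₈ passes through the intersection points L₂ ∩ L₆ and L₃ ∩ L₅, and L₉ passes through L₂ ∩ L₇ and L₄ ∩ L₅; and suppose that none of the nine intersection points L_i ∩ L_j for i ∈ {2,3,4}, j ∈ {5,6,7} lies on L₀. Then the three points a = L₂ ∩ L₅, b = L₃ ∩ L₆ and c = L₄ ∩ L₇ are collinear. -/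
/-- The complex projective plane `ℙ²(ℂ)`, as the projectivization of `ℂ³`. -/
abbrev ProjPlane := Projectivization ℂ (Fin 3 → ℂ)

/-- A line in `ℙ²(ℂ)`: the projectivization of a 2-dimensional linear subspace of `ℂ³`. -/
def IsProjLine (L : Set ProjPlane) : Prop :=
  ∃ W : Submodule ℂ (Fin 3 → ℂ), Module.finrank ℂ W = 2 ∧
    L = {x : ProjPlane | x.submodule ≤ W}

/-- Points of `ℙ²(ℂ)` are collinear if some line contains them all. -/
def ProjCollinear (a b c : ProjPlane) : Prop :=
  ∃ M : Set ProjPlane, IsProjLine M ∧ a ∈ M ∧ b ∈ M ∧ c ∈ M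

/-- Representatives of two distinct points are linearly independent. -/
lemma linearIndependent_rep_pair {x y : ProjPlane} (hxy : x ≠ y) :
    LinearIndependent ℂ ![x.rep, y.rep] := by
  have h := Projectivization.independent_iff.1
    ((Projectivization.independent_pair_iff_ne x y).2 hxy)
  have hrep : Projectivization.rep ∘ ![x, y] = ![x.rep, y.rep] := by
    ext i
    fin_cases i <;> rfl
  rwa [hrep] at h

/-- Two linearly independent vectors span a plane. -/
lemma finrank_span_pair_eq_two {v w : Fin 3 → ℂ} (h : LinearIndependent ℂ ![v, w]) :
    Module.finrank ℂ (Submodule.span ℂ {v, w}) = 2 := by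
  have hfin := finrank_span_eq_card h
  rwa [Matrix.range_cons_cons_empty, Fintype.card_fin] at hfin

open Projectivization in
/-- A point on the line through two distinct points is a combination of them. -/
lemma IsProjLine.exists_rep_eq {L : Set ProjPlane} (hL : IsProjLine L) {x y z : ProjPlane}
    (hxy : x ≠ y) (hx : x ∈ L) (hy : y ∈ L) (hz : z ∈ L) :
    ∃ p q : ℂ, z.rep = p • x.rep + q • y.rep := by
  obtain ⟨W, hW, rfl⟩ := hL
  simp only [Set.mem_ofPred_eq, submodule_eq, Submodule.span_singleton_le_iff_mem] at hx hy hz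
  have hle : Submodule.span ℂ {x.rep, y.rep} ≤ W := by
    simp [Submodule.span_le, Set.insert_subset_iff, hx, hy]
  have hfin := finrank_span_pair_eq_two (linearIndependent_rep_pair hxy)
  rw [← Submodule.eq_of_le_of_finrank_eq hle (hfin.trans hW.symm), Submodule.mem_span_pair] at hz
  obtain ⟨p, q, h⟩ := hz
  exact ⟨p, q, h.symm⟩

/-- A point whose representative is a combination of points on a line lies on that line. -/
lemma IsProjLine.mem_of_rep_eq {L : Set ProjPlane} (hL : IsProjLine L) {x y z : ProjPlane}
    (hx : x ∈ L) (hy : y ∈ L) {p q : ℂ} (hz : z.rep = p • x.rep + q • y.rep) : z ∈ L := by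
  obtain ⟨W, -, rfl⟩ := hL
  simp only [Set.mem_ofPred_eq, Projectivization.submodule_eq,
    Submodule.span_singleton_le_iff_mem] at *
  rw [hz]
  exact W.add_mem (W.smul_mem _ hx) (W.smul_mem _ hy)

/-- If `V`, `H` are distinct points of a line not containing `a`, then `V`, `H`, `a` are
linearly independent. -/
lemma IsProjLine.eq_zero_of_combination {L : Set ProjPlane} (hL : IsProjLine L)
    {V H a : ProjPlane} (hVH : V ≠ H) (hV : V ∈ L) (hH : H ∈ L) (ha : a ∉ L) {k l m : ℂ}
    (h : k • V.rep + l • H.rep + m • a.rep = 0) : k = 0 ∧ l = 0 ∧ m = 0 := by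
  have hm : m = 0 := by
    by_contra hm
    refine ha (hL.mem_of_rep_eq hV hH (p := -(m⁻¹ * k)) (q := -(m⁻¹ * l)) ?_)
    have := congrArg (m⁻¹ • ·) h
    simp only [smul_add, smul_smul, inv_mul_cancel₀ hm, one_smul, smul_zero] at this
    rw [← sub_eq_zero, ← this]
    module
  subst hm
  have := LinearIndependent.pair_iff.1 (linearIndependent_rep_pair hVH) k l (by simpa using h)
  exact ⟨this.1, this.2, rfl⟩

/-- In a complete quadrilateral with two vertices `V`, `H` on `L0`, whose diagonal `L8` meets `L0`
at `P`, the other diagonal joins `a` to the harmonic conjugate of `P` with respect to `V`, `H`. -/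
lemma rep_mem_span_harmonic_conjugate {L0 L2 L3 L5 L6 L8 : Set ProjPlane}
    (h0 : IsProjLine L0) (h2 : IsProjLine L2) (h3 : IsProjLine L3) (h5 : IsProjLine L5)
    (h6 : IsProjLine L6) (h8 : IsProjLine L8) {V H P a b r s : ProjPlane} (hVH : V ≠ H)
    (hV0 : V ∈ L0) (hV2 : V ∈ L2) (hV3 : V ∈ L3) (hH0 : H ∈ L0) (hH5 : H ∈ L5) (hH6 : H ∈ L6)
    (hP0 : P ∈ L0) (hP8 : P ∈ L8) (ha2 : a ∈ L2) (ha5 : a ∈ L5) (hb3 : b ∈ L3) (hb6 : b ∈ L6)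
    (hs2 : s ∈ L2) (hs6 : s ∈ L6) (hs8 : s ∈ L8) (hr3 : r ∈ L3) (hr5 : r ∈ L5) (hr8 : r ∈ L8)
    (ha0 : a ∉ L0) (hs0 : s ∉ L0) (hr0 : r ∉ L0) {α β : ℂ}
    (hP : P.rep = α • V.rep + β • H.rep) :
    b.rep ∈ Submodule.span ℂ {a.rep, α • V.rep - β • H.rep} := by
  have ne {x y : ProjPlane} (hx : x ∈ L0) (hy : y ∉ L0) : x ≠ y := fun h => hy (h ▸ hx)
  obtain ⟨y₁, x₁, hs⟩ := h2.exists_rep_eq (ne hV0 ha0) hV2 ha2 hs2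
  obtain ⟨y₂, x₂, hr⟩ := h5.exists_rep_eq (ne hH0 ha0) hH5 ha5 hr5
  obtain ⟨γ, δ, hr'⟩ := h8.exists_rep_eq (ne hP0 hs0) hP8 hs8 hr8
  obtain ⟨p, q, hb⟩ := h3.exists_rep_eq (ne hV0 hr0) hV3 hr3 hb3
  obtain ⟨p', q', hb'⟩ := h6.exists_rep_eq (ne hH0 hs0) hH6 hs6 hb6
  have hx₁ : x₁ ≠ 0 := by
    rintro rfl
    exact hs0 (h0.mem_of_rep_eq hV0 hV0 (p := y₁) (q := 0) (by simpa using hs))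
  obtain ⟨e₁, e₂, e₃⟩ := h0.eq_zero_of_combination hVH hV0 hH0 ha0
    (k := γ * α + δ * y₁) (l := γ * β - y₂) (m := δ * x₁ - x₂) (by
      rw [hr, hP, hs] at hr'
      rw [← sub_eq_zero] at hr'
      rw [← neg_eq_zero, ← hr']
      module)
  obtain ⟨f₁, -, f₃⟩ := h0.eq_zero_of_combination hVH hV0 hH0 ha0
    (k := q' * y₁ - p) (l := p' - q * y₂) (m := q' * x₁ - q * x₂) (by
      rw [hb, hr, hs] at hb'
      rw [← sub_eq_zero] at hb'
      rw [← neg_eq_zero, ← hb']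
      module)
  have hq : q' = q * δ := mul_right_cancel₀ hx₁ (by linear_combination f₃ - q * e₃)
  have hp : p = -(q * γ * α) := by linear_combination -f₁ + y₁ * hq + q * e₁
  have hy₂ : y₂ = γ * β := by linear_combination -e₂
  rw [Submodule.mem_span_pair]
  refine ⟨q * x₂, -(q * γ), ?_⟩
  rw [hb, hr, hp, hy₂]
  module

/-- The complete-quadrilateral / harmonic-conjugate lemma: in the configuration of the
paper's arrangement `𝒬` inside `ℙ²(ℂ)`, the points `a = L₂ ∩ L₅`, `b = L₃ ∩ L₆`
and `c = L₄ ∩ L₇` are collinear. -/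
theorem quadrilateral_collinearity
    (L0 L2 L3 L4 L5 L6 L7 L8 L9 : Set ProjPlane)
    (hlines : ∀ M ∈ [L0, L2, L3, L4, L5, L6, L7, L8, L9], IsProjLine M)
    (hdistinct : [L0, L2, L3, L4, L5, L6, L7, L8, L9].Pairwise (· ≠ ·))
    (V H P : ProjPlane)
    (hV : V ∈ L0 ∩ L2 ∩ L3 ∩ L4)
    (hH : H ∈ L0 ∩ L5 ∩ L6 ∩ L7)
    (hP : P ∈ L0 ∩ L8 ∩ L9)
    (hVH : V ≠ H) (hVP : V ≠ P) (hHP : H ≠ P)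
    (h8 : ∃ s, s ∈ L2 ∩ L6 ∩ L8)
    (h8' : ∃ s, s ∈ L3 ∩ L5 ∩ L8)
    (h9 : ∃ s, s ∈ L2 ∩ L7 ∩ L9)
    (h9' : ∃ s, s ∈ L4 ∩ L5 ∩ L9)
    (havoid : ∀ Li ∈ [L2, L3, L4], ∀ Lj ∈ [L5, L6, L7], ∀ x, x ∈ Li ∩ Lj → x ∉ L0)
    (a b c : ProjPlane)
    (ha : a ∈ L2 ∩ L5) (hb : b ∈ L3 ∩ L6) (hc : c ∈ L4 ∩ L7) :
    ProjCollinear a b c := by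
  simp only [List.forall_mem_cons, List.not_mem_nil, false_implies, implies_true, and_true]
    at hlines havoid
  obtain ⟨l0, l2, l3, l4, l5, l6, l7, l8, l9⟩ := hlines
  obtain ⟨⟨n25, n26, n27⟩, ⟨n35, -, -⟩, ⟨n45, -, -⟩⟩ := havoid
  obtain ⟨⟨⟨V0, V2⟩, V3⟩, V4⟩ := hV
  obtain ⟨⟨⟨H0, H5⟩, H6⟩, H7⟩ := hH
  obtain ⟨⟨P0, P8⟩, P9⟩ := hP
  obtain ⟨s, ⟨s2, s6⟩, s8⟩ := h8
  obtain ⟨r, ⟨r3, r5⟩, r8⟩ := h8'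
  obtain ⟨t, ⟨t2, t7⟩, t9⟩ := h9
  obtain ⟨u, ⟨u4, u5⟩, u9⟩ := h9'
  have a0 := n25 a ha
  obtain ⟨α, β, hPrep⟩ := l0.exists_rep_eq hVH V0 H0 P0
  have hb' := rep_mem_span_harmonic_conjugate l0 l2 l3 l5 l6 l8 hVH V0 V2 V3 H0 H5 H6 P0 P8
    ha.1 ha.2 hb.1 hb.2 s2 s6 s8 r3 r5 r8 a0 (n26 s ⟨s2, s6⟩) (n35 r ⟨r3, r5⟩) hPrep
  have hc' := rep_mem_span_harmonic_conjugate l0 l2 l4 l5 l7 l9 hVH V0 V2 V4 H0 H5 H7 P0 P9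
    ha.1 ha.2 hc.1 hc.2 t2 t7 t9 u4 u5 u9 a0 (n27 t ⟨t2, t7⟩) (n45 u ⟨u4, u5⟩) hPrep
  have hind : LinearIndependent ℂ ![a.rep, α • V.rep - β • H.rep] := by
    refine LinearIndependent.pair_iff.2 fun m k h => ?_
    obtain ⟨hα, hβ, hm⟩ := l0.eq_zero_of_combination hVH V0 H0 a0
      (k := k * α) (l := -(k * β)) (m := m) (by rw [← h]; module)
    refine ⟨hm, by_contra fun hk => P.rep_nonzero ?_⟩
    rw [neg_eq_zero] at hβ
    simp [hPrep, (mul_eq_zero.1 hα).resolve_left hk, (mul_eq_zero.1 hβ).resolve_left hk]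
  refine ⟨_, ⟨_, finrank_span_pair_eq_two hind, rfl⟩, ?_, ?_, ?_⟩ <;>
    simp only [Set.mem_ofPred_eq, Projectivization.submodule_eq,
      Submodule.span_singleton_le_iff_mem]
  exacts [Submodule.subset_span (Set.mem_insert _ _), hb', hc']
end

section
/- Let h : ℝ → ℝ be twice differentiable and let w, ρ, χ : ℝ → ℝ be differentiable, with ρ(t) ≥ 0 for all t and χ′(s) ≥ 0 for all s. Define Γ : ℝ² → ℝ⁴ by Γ(t, s) = ( t, s, h(t), w(t) + ρ(t)·χ(s)·h′(t) ). Then at every point (t, s), the standard symplectic form evaluated on the two coordinate tangent vectors of Γ satisfies ω( ∂Γ/∂t (t,s), ∂Γ/∂s (t,s) ) = 1 + ρ(t)·χ′(s)·h′(t)² ≥ 1 > 0; in particular, Γ parametrizes a symplectic surface in ℝ⁴ ≅ ℂ². -/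
/-- The standard symplectic form on `ℝ⁴ ≅ ℂ²` with coordinates `(x₁, x₂, y₁, y₂)`:
`ω(u, v) = u₁v₂ − u₂v₁ + u₃v₄ − u₄v₃`. -/
noncomputable def omega4 (u v : Fin 4 → ℝ) : ℝ :=
  u 0 * v 1 - u 1 * v 0 + u 2 * v 3 - u 3 * v 2

/-- The extension `Γ(t, s) = (t, s, h(t), w(t) + ρ(t)·χ(s)·h′(t))` of a wire of a
braided wiring diagram is a symplectic surface: the standard symplectic form evaluated
on the two coordinate tangent vectors equals `1 + ρ(t)·χ′(s)·h′(t)² ≥ 1 > 0`. -/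
theorem wiring_extension_symplectic
    (h w ρ χ : ℝ → ℝ)
    (hh : Differentiable ℝ h) (hh' : Differentiable ℝ (deriv h))
    (hw : Differentiable ℝ w) (hρ : Differentiable ℝ ρ) (hχ : Differentiable ℝ χ)
    (hρ0 : ∀ t, 0 ≤ ρ t) (hχ' : ∀ s, 0 ≤ deriv χ s)
    (Γ : ℝ → ℝ → Fin 4 → ℝ)
    (hΓ : ∀ t s, Γ t s = ![t, s, h t, w t + ρ t * χ s * deriv h t])
    (t s : ℝ) :
    omega4 (deriv (fun t' => Γ t' s) t) (deriv (fun s' => Γ t s') s)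
        = 1 + ρ t * deriv χ s * deriv h t ^ 2 ∧
      1 ≤ 1 + ρ t * deriv χ s * deriv h t ^ 2 ∧
      0 < omega4 (deriv (fun t' => Γ t' s) t) (deriv (fun s' => Γ t s') s) := by
  have hΓt : HasDerivAt (fun t' => Γ t' s)
      ![1, 0, deriv h t, deriv w t +
        (deriv ρ t * χ s * deriv h t + ρ t * χ s * deriv (deriv h) t)] t := by
    simp only [hΓ]
    refine hasDerivAt_pi.2 fun i => ?_
    fin_cases i
    · exact hasDerivAt_id t
    · exact hasDerivAt_const t s
    · exact (hh t).hasDerivAt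
    · exact (hw t).hasDerivAt.add
        (((hρ t).hasDerivAt.mul_const (χ s)).mul (hh' t).hasDerivAt)
  have hΓs : HasDerivAt (fun s' => Γ t s') ![0, 1, 0, ρ t * deriv χ s * deriv h t] s := by
    simp only [hΓ]
    refine hasDerivAt_pi.2 fun i => ?_
    fin_cases i
    · exact hasDerivAt_const s t
    · exact hasDerivAt_id s
    · exact hasDerivAt_const s (h t)
    · exact (((hχ s).hasDerivAt.const_mul (ρ t)).mul_const (deriv h t)).const_add (w t)
  have hω : omega4 (deriv (fun t' => Γ t' s) t) (deriv (fun s' => Γ t s') s)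
      = 1 + ρ t * deriv χ s * deriv h t ^ 2 := by
    rw [hΓt.deriv, hΓs.deriv]
    simp [omega4]
    ring
  have hnonneg : 0 ≤ ρ t * deriv χ s * deriv h t ^ 2 :=
    mul_nonneg (mul_nonneg (hρ0 t) (hχ' s)) (sq_nonneg _)
  exact ⟨hω, by linarith, by linarith⟩
end

section
/- Let ρ : ℝ → [0,1] and let χ : ℝ → ℝ satisfy χ(s) = 0 if and only if s = 0. Let h_j, w_j, h_k, w_k : ℝ → ℝ be differentiable, and define Γ_j(t, s) = ( t, s, h_j(t), w_j(t) + ρ(t)·χ(s)·h_j′(t) ) and Γ_k(t, s) = ( t, s, h_k(t), w_k(t) + ρ(t)·χ(s)·h_k′(t) ). Assume that for every t with h_j(t) = h_k(t), either (I) w_j(t) = w_k(t), h_j′(t) ≠ h_k′(t), and ρ(t) = 1, or (II) w_j(t) ≠ w_k(t) and ρ(t) = 0. Then any coincidence Γ_j(t₀, s₀) = Γ_k(t₀, s₀) forces s₀ = 0, h_j(t₀) = h_k(t₀), and w_j(t₀) = w_k(t₀); that is, the two extended surfaces intersect only at intersection points of the original wiring diagram, which lie in the slice s = 0. -/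
/-- Disjointness of the symplectic extensions of two wires of a braided wiring diagram:
any coincidence `Γ_j(t₀, s₀) = Γ_k(t₀, s₀)` of the extended surfaces
`Γ_j(t,s) = (t, s, h_j(t), w_j(t) + ρ(t)χ(s)h_j′(t))` forces `s₀ = 0`,
`h_j(t₀) = h_k(t₀)` and `w_j(t₀) = w_k(t₀)`, i.e. the surfaces intersect only at
intersection points of the original wiring diagram, which lie in the slice `s = 0`. -/
theorem wiring_extensions_meet_only_at_diagram_intersections
    (ρ χ hj wj hk wk : ℝ → ℝ)
    (hρ : ∀ t, ρ t ∈ Set.Icc (0 : ℝ) 1)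
    (hχ : ∀ s, χ s = 0 ↔ s = 0)
    (hhj : Differentiable ℝ hj) (hwj : Differentiable ℝ wj)
    (hhk : Differentiable ℝ hk) (hwk : Differentiable ℝ wk)
    (Γj Γk : ℝ → ℝ → Fin 4 → ℝ)
    (hΓj : ∀ t s, Γj t s = ![t, s, hj t, wj t + ρ t * χ s * deriv hj t])
    (hΓk : ∀ t s, Γk t s = ![t, s, hk t, wk t + ρ t * χ s * deriv hk t])
    (hcases : ∀ t, hj t = hk t →
      (wj t = wk t ∧ deriv hj t ≠ deriv hk t ∧ ρ t = 1) ∨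
      (wj t ≠ wk t ∧ ρ t = 0))
    (t₀ s₀ : ℝ) (hco : Γj t₀ s₀ = Γk t₀ s₀) :
    s₀ = 0 ∧ hj t₀ = hk t₀ ∧ wj t₀ = wk t₀ := by
  rw [hΓj, hΓk] at hco
  have hh : hj t₀ = hk t₀ := congrFun hco 2
  have hw : wj t₀ + ρ t₀ * χ s₀ * deriv hj t₀ = wk t₀ + ρ t₀ * χ s₀ * deriv hk t₀ :=
    congrFun hco 3
  rcases hcases t₀ hh with ⟨hw₀, hd, hρ₀⟩ | ⟨hw₀, hρ₀⟩
  · refine ⟨(hχ s₀).1 ?_, hh, hw₀⟩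
    rw [hw₀, hρ₀, one_mul] at hw
    exact (mul_eq_mul_left_iff.1 (add_left_cancel hw)).resolve_left hd
  · exact absurd (by simpa [hρ₀] using hw) hw₀
end

section
/- Let M ≥ 1, δ > 0, η > 0, and let f, g : [−M, M] → ℝ be differentiable. Suppose there is an open interval (a, b) with −M < a < b < M such that { x ∈ [−M, M] : |f(x) − g(x)| < δ } = (a, b), and suppose |f′(x) − g′(x)| > η for every x ∈ (a, b). Let p, q : [−M, M] → ℝ be differentiable functions with |p(x) − f(x)| < δ/3, |q(x) − g(x)| < δ/3, |p′(x) − f′(x)| < η/3, and |q′(x) − g′(x)| < η/3 for every x ∈ [−M, M]. Then the function p − q has exactly one zero in [−M, M], and this zero lies in (a, b). -/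
open Set

/-- **Rolle's theorem**, contrapositive form: a continuous function on `[a, b]` whose derivative
does not vanish on `(a, b)` is injective on `[a, b]`. -/
theorem injOn_Icc_of_hasDerivAt_ne_zero {a b : ℝ} {h h' : ℝ → ℝ}
    (hc : ContinuousOn h (Icc a b)) (hd : ∀ x ∈ Ioo a b, HasDerivAt h (h' x) x)
    (h0 : ∀ x ∈ Ioo a b, h' x ≠ 0) : InjOn h (Icc a b) := by
  have hne : ∀ x ∈ Icc a b, ∀ y ∈ Icc a b, h x = h y → ¬ x < y := by
    intro x hx y hy hxy hlt
    have hsub : Ioo x y ⊆ Ioo a b := Ioo_subset_Ioo hx.1 hy.2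
    obtain ⟨c, hcmem, hc0⟩ := exists_hasDerivAt_eq_zero hlt
      (hc.mono (Icc_subset_Icc hx.1 hy.2)) hxy fun z hz => hd z (hsub hz)
    exact h0 c (hsub hcmem) hc0
  intro x hx y hy hxy
  exact le_antisymm (not_lt.1 (hne y hy x hx hxy.symm)) (not_lt.1 (hne x hx y hy hxy))

/-- Stability of crossings under `C¹`-small perturbation: if `|f − g| < δ` exactly on
`(a, b) ⊆ [−M, M]`, the slopes satisfy `|f′ − g′| > η` on `(a, b)`, and `p, q`
approximate `f, g` within `δ/3` in `C⁰` and within `η/3` in `C¹` on `[−M, M]`,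
then `p − q` has exactly one zero in `[−M, M]`, and this zero lies in `(a, b)`. -/
theorem perturbed_crossing_unique
    (M δ η : ℝ) (hM : 1 ≤ M) (hδ : 0 < δ) (hη : 0 < η)
    (a b : ℝ) (haM : -M < a) (hab : a < b) (hbM : b < M)
    (f g p q f' g' p' q' : ℝ → ℝ)
    (hf : ∀ x ∈ Set.Icc (-M) M, HasDerivWithinAt f (f' x) (Set.Icc (-M) M) x)
    (hg : ∀ x ∈ Set.Icc (-M) M, HasDerivWithinAt g (g' x) (Set.Icc (-M) M) x)
    (hp : ∀ x ∈ Set.Icc (-M) M, HasDerivWithinAt p (p' x) (Set.Icc (-M) M) x)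
    (hq : ∀ x ∈ Set.Icc (-M) M, HasDerivWithinAt q (q' x) (Set.Icc (-M) M) x)
    (hset : {x | x ∈ Set.Icc (-M) M ∧ |f x - g x| < δ} = Set.Ioo a b)
    (hslope : ∀ x ∈ Set.Ioo a b, η < |f' x - g' x|)
    (hpf : ∀ x ∈ Set.Icc (-M) M, |p x - f x| < δ / 3)
    (hqg : ∀ x ∈ Set.Icc (-M) M, |q x - g x| < δ / 3)
    (hpf' : ∀ x ∈ Set.Icc (-M) M, |p' x - f' x| < η / 3)
    (hqg' : ∀ x ∈ Set.Icc (-M) M, |q' x - g' x| < η / 3) :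
    (∃! x, x ∈ Set.Icc (-M) M ∧ p x - q x = 0) ∧
    (∀ x ∈ Set.Icc (-M) M, p x - q x = 0 → x ∈ Set.Ioo a b) := by
  have hsub : Icc a b ⊆ Icc (-M) M := Icc_subset_Icc haM.le hbM.le
  have hnhds : ∀ x ∈ Ioo a b, Icc (-M) M ∈ nhds x := fun x hx =>
    Icc_mem_nhds (haM.trans hx.1) (hx.2.trans hbM)
  have hcfg : ContinuousOn (fun x => f x - g x) (Icc a b) := fun x hx =>
    (((hf x (hsub hx)).sub (hg x (hsub hx))).continuousWithinAt).mono hsub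
  have hcpq : ContinuousOn (fun x => p x - q x) (Icc a b) := fun x hx =>
    (((hp x (hsub hx)).sub (hq x (hsub hx))).continuousWithinAt).mono hsub
  have hinjfg : InjOn (fun x => f x - g x) (Icc a b) := by
    refine injOn_Icc_of_hasDerivAt_ne_zero (h' := fun x => f' x - g' x) hcfg
      (fun x hx => ?_) fun x hx => abs_pos.1 (hη.trans (hslope x hx))
    have hxM := hsub (Ioo_subset_Icc_self hx)
    exact ((hf x hxM).hasDerivAt (hnhds x hx)).sub ((hg x hxM).hasDerivAt (hnhds x hx))
  have hinjpq : InjOn (fun x => p x - q x) (Icc a b) := by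
    refine injOn_Icc_of_hasDerivAt_ne_zero (h' := fun x => p' x - q' x) hcpq
      (fun x hx => ?_) fun x hx h0 => ?_
    · have hxM := hsub (Ioo_subset_Icc_self hx)
      exact ((hp x hxM).hasDerivAt (hnhds x hx)).sub ((hq x hxM).hasDerivAt (hnhds x hx))
    · have hxM := hsub (Ioo_subset_Icc_self hx)
      have h1 := abs_lt.1 (hpf' x hxM)
      have h2 := abs_lt.1 (hqg' x hxM)
      rcases lt_abs.1 (hslope x hx) with h3 | h3 <;> linarith
  have hge : ∀ x ∈ Icc (-M) M, x ∉ Ioo a b → δ ≤ |f x - g x| := fun x hx hxab =>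
    not_lt.1 fun hlt => hxab (hset ▸ ⟨hx, hlt⟩)
  have hloc : ∀ x ∈ Icc (-M) M, p x - q x = 0 → x ∈ Ioo a b := by
    intro x hx h0
    by_contra hxab
    have h1 := abs_lt.1 (hpf x hx)
    have h2 := abs_lt.1 (hqg x hx)
    rcases le_abs.1 (hge x hx hxab) with h3 | h3 <;> linarith
  have hle : ∀ x ∈ Icc a b, |f x - g x| ≤ δ := by
    intro x hx
    rw [← closure_Ioo hab.ne] at hx hcfg
    exact le_on_closure (fun y hy => (hset.symm ▸ hy :
      y ∈ {x | x ∈ Icc (-M) M ∧ |f x - g x| < δ}).2.le) hcfg.abs continuousOn_const hx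
  have ha : a ∈ Icc a b := left_mem_Icc.2 hab.le
  have hb : b ∈ Icc a b := right_mem_Icc.2 hab.le
  have hne : f a - g a ≠ f b - g b := fun h => hab.ne (hinjfg ha hb h)
  have hzero : ∃ x ∈ Icc a b, p x - q x = 0 := by
    have hpa := abs_lt.1 (hpf a (hsub ha))
    have hqa := abs_lt.1 (hqg a (hsub ha))
    have hpb := abs_lt.1 (hpf b (hsub hb))
    have hqb := abs_lt.1 (hqg b (hsub hb))
    have hla := abs_le.1 (hle a ha)
    have hlb := abs_le.1 (hle b hb)
    rcases le_abs.1 (hge a (hsub ha) fun h => h.1.false) with h1 | h1 <;>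
      rcases le_abs.1 (hge b (hsub hb) fun h => h.2.false) with h2 | h2
    · exact absurd (by linarith) hne
    · exact intermediate_value_Icc' hab.le hcpq ⟨by linarith, by linarith⟩
    · exact intermediate_value_Icc hab.le hcpq ⟨by linarith, by linarith⟩
    · exact absurd (by linarith) hne
  obtain ⟨x, hx, hx0⟩ := hzero
  refine ⟨⟨x, ⟨hsub hx, hx0⟩, fun y hy => ?_⟩, hloc⟩
  exact hinjpq (Ioo_subset_Icc_self (hloc y hy.1 hy.2)) hx (hy.2.trans hx0.symm)
end

section
/- Let M ≥ 1, δ > 0, η > 0, m ≥ 2, and let f₁, …, f_m : [−M, M] × [0, 1] → ℝ be continuously differentiable functions with f_i(0, 0) = 0 for every i, and such that for every t ∈ [0, 1] and every pair i ≠ j: (i) there is exactly one x̄ ∈ [−M, M] with f_i(x̄, t) = f_j(x̄, t); (ii) the set { x ∈ [−M, M] : |f_i(x, t) − f_j(x, t)| < δ } is an open interval (a, b) with −M < a < b < M containing x̄; (iii) |∂f_i/∂x (x, t) − ∂f_j/∂x (x, t)| > η whenever |f_i(x, t) − f_j(x, t)| < δ. Let x₁, …, x_n ∈ [−M, M] be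 the points at which at least two of the functions f_i(·, 1) agree. Then for every ε > 0 there exist real polynomials p₁, …, p_m in the variables (x, t) such that: |p_i(x, t) − f_i(x, t)| < min(δ/3, η/3, ε) and |∂p_i/∂x (x, t) − ∂f_i/∂x (x, t)| < min(δ/3, η/3, ε) on [−M, M] × [0, 1]; p_i(0, 0) = 0 for every i; p_i(x_k, 1) = f_i(x_k, 1) for every i and every k; and for every t ∈ [0, 1] and every i ≠ j the function x ↦ p_i(x, t) − p_j(x, t) has exactly one zero in [−M, M]. -/
/-- **Stone–Weierstrass** for polynomials in two variables on a compact subset of the plane. -/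
theorem exists_mvPolynomial_near_of_continuousOn {K : Set (ℝ × ℝ)} (hK : IsCompact K)
    {g : ℝ × ℝ → ℝ} (hg : ContinuousOn g K) {e : ℝ} (he : 0 < e) :
    ∃ p : MvPolynomial (Fin 2) ℝ, ∀ q ∈ K, |MvPolynomial.eval ![q.1, q.2] p - g q| < e := by
  have : CompactSpace K := isCompact_iff_compactSpace.mp hK
  let u : C(K, ℝ) := ⟨fun q => q.1.1, by fun_prop⟩
  let v : C(K, ℝ) := ⟨fun q => q.1.2, by fun_prop⟩
  let φ : MvPolynomial (Fin 2) ℝ →ₐ[ℝ] C(K, ℝ) := MvPolynomial.aeval ![u, v]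
  have hφ (p : MvPolynomial (Fin 2) ℝ) (q : K) :
      φ p q = MvPolynomial.eval ![q.1.1, q.1.2] p := by
    induction p using MvPolynomial.induction_on with
    | C a => simp [φ]
    | add p₁ p₂ h₁ h₂ => simp [h₁, h₂]
    | mul_X p i h =>
      rw [map_mul, ContinuousMap.mul_apply, h, map_mul]
      fin_cases i <;> simp [φ, u, v]
  have hsep : φ.range.SeparatesPoints := by
    intro a b hab
    by_cases h : a.1.1 = b.1.1
    · have h' : a.1.2 ≠ b.1.2 := fun h' => hab (Subtype.ext (Prod.ext h h'))
      exact ⟨_, ⟨φ (MvPolynomial.X 1), ⟨_, rfl⟩, rfl⟩, by simpa [hφ] using h'⟩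
    · exact ⟨_, ⟨φ (MvPolynomial.X 0), ⟨_, rfl⟩, rfl⟩, by simpa [hφ] using h⟩
  obtain ⟨⟨_, p, rfl⟩, hp⟩ :=
    ContinuousMap.exists_mem_subalgebra_near_continuous_of_separatesPoints φ.range hsep
      (K.domRestrict g) hg.domRestrict e he
  refine ⟨p, fun q hq => ?_⟩
  have := hp ⟨q, hq⟩
  rwa [← hφ p ⟨q, hq⟩]

/-- Over a field of characteristic zero every polynomial has an antiderivative in each variable. -/
theorem MvPolynomial.exists_pderiv_eq {σ K : Type*} [Field K] [CharZero K] (i : σ)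
    (p : MvPolynomial σ K) : ∃ r : MvPolynomial σ K, MvPolynomial.pderiv i r = p := by
  induction p using MvPolynomial.induction_on' with
  | monomial s a =>
    refine ⟨MvPolynomial.monomial (s + Finsupp.single i 1) (a / (s i + 1)), ?_⟩
    rw [MvPolynomial.pderiv_monomial, add_tsub_cancel_right]
    have : (s i : K) + 1 ≠ 0 := by exact_mod_cast Nat.succ_ne_zero (s i)
    simp [this]
  | add p₁ p₂ h₁ h₂ =>
    obtain ⟨r₁, rfl⟩ := h₁
    obtain ⟨r₂, rfl⟩ := h₂
    exact ⟨r₁ + r₂, map_add _ _ _⟩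

theorem MvPolynomial.hasDerivAt_eval_pderiv_zero (p : MvPolynomial (Fin 2) ℝ) (x t : ℝ) :
    HasDerivAt (fun y => MvPolynomial.eval ![y, t] p)
      (MvPolynomial.eval ![x, t] (MvPolynomial.pderiv 0 p)) x := by
  induction p using MvPolynomial.induction_on with
  | C a => simpa using hasDerivAt_const x a
  | add p₁ p₂ h₁ h₂ => simpa using h₁.fun_add h₂
  | mul_X p i h =>
    fin_cases i
    · have := h.fun_mul (hasDerivAt_id' x)
      simp only [MvPolynomial.pderiv_mul, map_add, map_mul, MvPolynomial.eval_X]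
      simpa using this
    · have := h.mul_const t
      simp only [MvPolynomial.pderiv_mul, map_add, map_mul, MvPolynomial.eval_X]
      simpa [MvPolynomial.pderiv_X] using this

theorem MvPolynomial.eval_aeval_X {σ : Type*} (v : σ → ℝ) (i : σ) (q : Polynomial ℝ) :
    MvPolynomial.eval v (Polynomial.aeval (MvPolynomial.X i) q) = q.eval (v i) := by
  have := Polynomial.aeval_algHom_apply (MvPolynomial.aeval v : MvPolynomial σ ℝ →ₐ[ℝ] ℝ)
    (MvPolynomial.X i) q
  simpa [MvPolynomial.aeval_eq_eval] using this.symm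

theorem MvPolynomial.pderiv_aeval_X_self {σ : Type*} (i : σ) (q : Polynomial ℝ) :
    MvPolynomial.pderiv i (Polynomial.aeval (MvPolynomial.X i) q) =
      Polynomial.aeval (MvPolynomial.X i : MvPolynomial σ ℝ) (Polynomial.derivative q) := by
  simp [Derivation.map_aeval]

theorem MvPolynomial.pderiv_aeval_X_of_ne {σ : Type*} {i j : σ} (h : j ≠ i) (q : Polynomial ℝ) :
    MvPolynomial.pderiv i (Polynomial.aeval (MvPolynomial.X j : MvPolynomial σ ℝ) q) = 0 := by
  simp [Derivation.map_aeval, MvPolynomial.pderiv_X_of_ne h]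

/-- A `C¹` function on a rectangle and its first partial derivative are simultaneously uniformly
approximated by a polynomial and its first partial derivative. -/
theorem exists_mvPolynomial_near_with_pderiv {M : ℝ} (hM : 0 < M) {f fx : ℝ → ℝ → ℝ}
    (hf : ContDiffOn ℝ 1 (fun q : ℝ × ℝ => f q.1 q.2) (Set.Icc (-M) M ×ˢ Set.Icc (0 : ℝ) 1))
    (hfx : ∀ t ∈ Set.Icc (0 : ℝ) 1, ∀ x ∈ Set.Icc (-M) M,
      HasDerivWithinAt (fun y => f y t) (fx x t) (Set.Icc (-M) M) x)
    {e : ℝ} (he : 0 < e) :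
    ∃ p : MvPolynomial (Fin 2) ℝ, ∀ x ∈ Set.Icc (-M) M, ∀ t ∈ Set.Icc (0 : ℝ) 1,
      |MvPolynomial.eval ![x, t] p - f x t| < e ∧
      |MvPolynomial.eval ![x, t] (MvPolynomial.pderiv 0 p) - fx x t| < e := by
  set K := Set.Icc (-M) M ×ˢ Set.Icc (0 : ℝ) 1
  have hUI : UniqueDiffOn ℝ (Set.Icc (-M) M) := uniqueDiffOn_Icc (by linarith)
  have hUK : UniqueDiffOn ℝ K := hUI.prod (uniqueDiffOn_Icc one_pos)
  have h0 : (0 : ℝ) ∈ Set.Icc (-M) M := ⟨by linarith, hM.le⟩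
  have hfxcont : ContinuousOn (fun q : ℝ × ℝ => fx q.1 q.2) K := by
    have hc := (hf.continuousOn_fderivWithin hUK le_rfl).clm_apply
      (continuousOn_const (c := ((1, 0) : ℝ × ℝ)))
    refine hc.congr fun q hq => ?_
    have hd := ((hf.differentiableOn one_ne_zero) q hq).hasFDerivWithinAt
    have hline : HasDerivWithinAt (fun y : ℝ => (y, q.2)) ((1, 0) : ℝ × ℝ)
        (Set.Icc (-M) M) q.1 :=
      (hasDerivWithinAt_id _ _).prodMk (hasDerivWithinAt_const _ _ _)
    have hcomp := hd.comp_hasDerivWithinAt (f := fun y : ℝ => (y, q.2)) q.1 hline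
      (fun y hy => ⟨hy, hq.2⟩)
    exact (hUI q.1 hq.1).eq_deriv _ (hfx q.2 hq.2 q.1 hq.1) hcomp
  set d := e / (1 + M) / 2 with hd
  have hdpos : 0 < d := by positivity
  obtain ⟨P, hP⟩ := exists_mvPolynomial_near_of_continuousOn
    (isCompact_Icc.prod isCompact_Icc) hfxcont hdpos
  obtain ⟨R, rfl⟩ := MvPolynomial.exists_pderiv_eq 0 P
  have hRcont : Continuous fun t : ℝ => MvPolynomial.eval ![(0 : ℝ), t] R :=
    (MvPolynomial.continuous_eval R).comp (by fun_prop)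
  have hfcont : ContinuousOn (fun t => f 0 t) (Set.Icc 0 1) :=
    hf.continuousOn.comp (f := fun t : ℝ => ((0 : ℝ), t)) (by fun_prop) fun t ht => ⟨h0, ht⟩
  obtain ⟨Q, hQ⟩ := exists_polynomial_near_of_continuousOn 0 1
    (fun t => f 0 t - MvPolynomial.eval ![(0 : ℝ), t] R) (hfcont.sub hRcont.continuousOn) d hdpos
  have hde : d * (1 + M) < e := by
    rw [hd]; field_simp; linarith
  refine ⟨R + Polynomial.aeval (MvPolynomial.X 1) Q, fun x hx t ht => ?_⟩
  rw [map_add, map_add, MvPolynomial.pderiv_aeval_X_of_ne (by decide), add_zero,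
    MvPolynomial.eval_aeval_X]
  refine ⟨?_, (hP (x, t) ⟨hx, ht⟩).trans (by nlinarith)⟩
  have hmv := (convex_Icc (-M) M).norm_image_sub_le_of_norm_hasDerivWithin_le
    (f := fun y => MvPolynomial.eval ![y, t] R - f y t) (C := d)
    (fun y hy => (R.hasDerivAt_eval_pderiv_zero y t).hasDerivWithinAt.sub (hfx t ht y hy))
    (fun y hy => (hP (y, t) ⟨hy, ht⟩).le) h0 hx
  rw [Real.norm_eq_abs, Real.norm_eq_abs, sub_zero] at hmv
  have hxM : |x| ≤ M := abs_le.2 hx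
  have hQt := hQ t ht
  have hmv' := hmv.trans (mul_le_mul_of_nonneg_left hxM hdpos.le)
  simp only [Matrix.cons_val_one, Matrix.cons_val_fin_one]
  rw [abs_le] at hmv'
  rw [abs_lt] at hQt ⊢
  constructor <;> linarith [hmv'.1, hmv'.2, hQt.1, hQt.2]

/-- Interpolation at finitely many nodes is bounded, in `C¹` norm on a compact interval, by a
constant multiple of the size of the data. -/
theorem exists_interpolation_bound (S : Finset ℝ) (a b : ℝ) :
    ∃ C : ℝ, 0 ≤ C ∧ ∀ (r : ℝ → ℝ) (e : ℝ), (∀ s ∈ S, |r s| ≤ e) →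
      ∃ L : Polynomial ℝ, (∀ s ∈ S, L.eval s = r s) ∧ ∀ x ∈ Set.Icc a b,
        |L.eval x| ≤ C * e ∧ |L.derivative.eval x| ≤ C * e := by
  have hb (q : Polynomial ℝ) : ∃ c : ℝ, 0 ≤ c ∧ ∀ x ∈ Set.Icc a b, |q.eval x| ≤ c := by
    obtain ⟨c, hc⟩ := (isCompact_Icc (a := a) (b := b)).exists_bound_of_continuousOn
      q.continuous.continuousOn
    exact ⟨|c|, abs_nonneg c, fun x hx => (hc x hx).trans (le_abs_self c)⟩
  choose c hc0 hc using hb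
  let B : ℝ → Polynomial ℝ := Lagrange.basis S id
  have key (r : ℝ → ℝ) (e : ℝ) (hr : ∀ s ∈ S, |r s| ≤ e) (q : ℝ → Polynomial ℝ) (x : ℝ)
      (hx : x ∈ Set.Icc a b) : |∑ s ∈ S, r s * (q s).eval x| ≤ (∑ s ∈ S, c (q s)) * e := by
    refine (Finset.abs_sum_le_sum_abs _ _).trans ?_
    rw [Finset.sum_mul]
    refine Finset.sum_le_sum fun s hs => ?_
    rw [abs_mul, mul_comm]
    exact mul_le_mul (hc _ x hx) (hr s hs) (abs_nonneg _) (hc0 _)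
  have hsum (q : ℝ → Polynomial ℝ) : 0 ≤ ∑ s ∈ S, c (q s) := Finset.sum_nonneg fun s _ => hc0 _
  refine ⟨∑ s ∈ S, c (B s) + ∑ s ∈ S, c (B s).derivative,
    add_nonneg (hsum _) (hsum _), fun r e hr => ?_⟩
  rcases S.eq_empty_or_nonempty with rfl | ⟨s₀, hs₀⟩
  · exact ⟨0, by simp⟩
  have he : 0 ≤ e := (abs_nonneg _).trans (hr s₀ hs₀)
  refine ⟨Lagrange.interpolate S id r, fun s hs =>
    Lagrange.eval_interpolate_at_node r (Set.injOn_id _) hs, fun x hx => ⟨?_, ?_⟩⟩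
  · have := key r e hr B x hx
    have h2 := mul_nonneg (hsum fun s => (B s).derivative) he
    simp only [Lagrange.interpolate_apply, Polynomial.eval_finsetSum, Polynomial.eval_mul,
      Polynomial.eval_C]
    rw [add_mul]
    exact this.trans (le_add_of_nonneg_right h2)
  · have := key r e hr (fun s => (B s).derivative) x hx
    have h2 := mul_nonneg (hsum B) he
    simp only [Lagrange.interpolate_apply, Polynomial.derivative_sum, Polynomial.derivative_C_mul,
      Polynomial.eval_finsetSum, Polynomial.eval_mul, Polynomial.eval_C]
    rw [add_mul]
    exact this.trans (le_add_of_nonneg_left h2)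

/-- `C¹` approximation by a polynomial which agrees with the function at the origin and at
finitely many points of the line `t = 1`. -/
theorem exists_mvPolynomial_near_with_pderiv_interpolating {M : ℝ} (hM : 0 < M)
    {f fx : ℝ → ℝ → ℝ}
    (hf : ContDiffOn ℝ 1 (fun q : ℝ × ℝ => f q.1 q.2) (Set.Icc (-M) M ×ˢ Set.Icc (0 : ℝ) 1))
    (hfx : ∀ t ∈ Set.Icc (0 : ℝ) 1, ∀ x ∈ Set.Icc (-M) M,
      HasDerivWithinAt (fun y => f y t) (fx x t) (Set.Icc (-M) M) x)
    (S : Finset ℝ) (hS : ∀ s ∈ S, s ∈ Set.Icc (-M) M) {e : ℝ} (he : 0 < e) :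
    ∃ p : MvPolynomial (Fin 2) ℝ,
      (∀ x ∈ Set.Icc (-M) M, ∀ t ∈ Set.Icc (0 : ℝ) 1,
        |MvPolynomial.eval ![x, t] p - f x t| < e ∧
        |MvPolynomial.eval ![x, t] (MvPolynomial.pderiv 0 p) - fx x t| < e) ∧
      MvPolynomial.eval ![0, 0] p = f 0 0 ∧
      ∀ s ∈ S, MvPolynomial.eval ![s, 1] p = f s 1 := by
  obtain ⟨C, hC, hL⟩ := exists_interpolation_bound S (-M) M
  set d := e / (2 + C * 2) / 2 with hd
  have hdpos : 0 < d := by positivity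
  have hde : d * (2 + C * 2) < e := by
    rw [hd]; field_simp; linarith
  have h0 : (0 : ℝ) ∈ Set.Icc (-M) M := ⟨by linarith, hM.le⟩
  obtain ⟨p, hp⟩ := exists_mvPolynomial_near_with_pderiv hM hf hfx hdpos
  set c := MvPolynomial.eval ![0, 0] p - f 0 0
  have hc : |c| < d := (hp 0 h0 0 ⟨le_rfl, zero_le_one⟩).1
  obtain ⟨L, hLS, hLb⟩ := hL (fun s => f s 1 - (MvPolynomial.eval ![s, 1] p - c)) (2 * d)
    fun s hs => by
      have h1 := (hp s (hS s hs) 1 ⟨zero_le_one, le_rfl⟩).1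
      rw [abs_lt] at h1 hc
      rw [abs_le]
      constructor <;> linarith [h1.1, h1.2, hc.1, hc.2]
  have heval (x t : ℝ) : MvPolynomial.eval ![x, t] (p - MvPolynomial.C c +
      MvPolynomial.X 1 * Polynomial.aeval (MvPolynomial.X 0) L) =
      MvPolynomial.eval ![x, t] p - c + t * L.eval x := by
    simp [MvPolynomial.eval_aeval_X]
  have hpd (x t : ℝ) : MvPolynomial.eval ![x, t] (MvPolynomial.pderiv 0 (p - MvPolynomial.C c +
      MvPolynomial.X 1 * Polynomial.aeval (MvPolynomial.X 0) L)) =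
      MvPolynomial.eval ![x, t] (MvPolynomial.pderiv 0 p) + t * L.derivative.eval x := by
    rw [map_add, map_sub, MvPolynomial.pderiv_C, MvPolynomial.pderiv_mul,
      MvPolynomial.pderiv_X_of_ne (by decide), MvPolynomial.pderiv_aeval_X_self]
    simp [MvPolynomial.eval_aeval_X]
  refine ⟨p - MvPolynomial.C c + MvPolynomial.X 1 * Polynomial.aeval (MvPolynomial.X 0) L,
    fun x hx t ht => ?_, ?_, fun s hs => ?_⟩
  · rw [heval, hpd]
    obtain ⟨h1, h2⟩ := hp x hx t ht
    have hmul {y B : ℝ} (hy : |y| ≤ B) : |t * y| ≤ B := by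
      rw [abs_mul, abs_of_nonneg ht.1]
      exact (mul_le_of_le_one_left (abs_nonneg y) ht.2).trans hy
    have h3 := hmul (hLb x hx).1
    have h4 := hmul (hLb x hx).2
    rw [abs_le] at h3 h4
    rw [abs_lt] at h1 h2 hc
    constructor <;> rw [abs_lt] <;> constructor <;>
      linarith [h1.1, h1.2, h2.1, h2.2, h3.1, h3.2, h4.1, h4.2, hc.1, hc.2]
  · rw [heval]
    simp [c]
  · rw [heval, hLS s hs]
    ring

/-- If `g` is transverse to zero, in the sense that `{|g| < δ}` is an interval around a zero of
`g` on which `|g'| > η`, then every function `C¹`-close to `g` has exactly one zero. -/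
theorem existsUnique_zero_of_near {M δ η a b xbar : ℝ} {g g' q q' : ℝ → ℝ}
    (hg : ∀ x ∈ Set.Icc (-M) M, HasDerivWithinAt g (g' x) (Set.Icc (-M) M) x)
    (hq : ∀ x ∈ Set.Icc (-M) M, HasDerivWithinAt q (q' x) (Set.Icc (-M) M) x)
    (ha : -M < a) (hb : b < M) (hxbar : xbar ∈ Set.Ioo a b) (hgx : g xbar = 0)
    (hset : {x | x ∈ Set.Icc (-M) M ∧ |g x| < δ} = Set.Ioo a b)
    (hslope : ∀ x ∈ Set.Icc (-M) M, |g x| < δ → η < |g' x|)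
    (hη : 0 < η)
    (hqg : ∀ x ∈ Set.Icc (-M) M, |q x - g x| < δ)
    (hqg' : ∀ x ∈ Set.Icc (-M) M, |q' x - g' x| < η) :
    ∃! x, x ∈ Set.Icc (-M) M ∧ q x = 0 := by
  have hab : a < b := hxbar.1.trans hxbar.2
  have hsub : Set.Icc a b ⊆ Set.Icc (-M) M := Set.Icc_subset_Icc ha.le hb.le
  have hsmall {x : ℝ} (hx : x ∈ Set.Ioo a b) : |g x| < δ := (hset.symm.subset hx).2
  have hlarge {x : ℝ} (hx : x ∈ Set.Icc (-M) M) (hx' : x ∉ Set.Ioo a b) : δ ≤ |g x| :=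
    not_lt.1 fun h => hx' (hset.subset ⟨hx, h⟩)
  have hinj {h h' : ℝ → ℝ}
      (hh : ∀ x ∈ Set.Icc (-M) M, HasDerivWithinAt h (h' x) (Set.Icc (-M) M) x)
      (hne : ∀ x ∈ Set.Ioo a b, h' x ≠ 0) {x y : ℝ} (hx : x ∈ Set.Icc a b)
      (hy : y ∈ Set.Icc a b) (hxy : x < y) : h x ≠ h y := by
    intro heq
    have hxyI : Set.Icc x y ⊆ Set.Icc (-M) M := (Set.Icc_subset_Icc hx.1 hy.2).trans hsub
    obtain ⟨z, hz, hz0⟩ := exists_hasDerivAt_eq_zero hxy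
      (fun w hw => ((hh w (hxyI hw)).continuousWithinAt).mono hxyI) heq
      (f' := h') (fun w hw => (hh w (hxyI (Set.Ioo_subset_Icc_self hw))).hasDerivAt
        (Icc_mem_nhds (ha.trans_le (hx.1.trans hw.1.le)) ((hw.2.le.trans hy.2).trans_lt hb)))
    exact hne z ⟨hx.1.trans_lt hz.1, hz.2.trans_le hy.2⟩ hz0
  have hg'ne : ∀ x ∈ Set.Ioo a b, g' x ≠ 0 := fun x hx h0 => by
    have := hslope x (hsub (Set.Ioo_subset_Icc_self hx)) (hsmall hx)
    rw [h0, abs_zero] at this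
    exact this.not_gt hη
  have hq'ne : ∀ x ∈ Set.Ioo a b, q' x ≠ 0 := fun x hx h0 => by
    have h1 := hslope x (hsub (Set.Ioo_subset_Icc_self hx)) (hsmall hx)
    have h2 := hqg' x (hsub (Set.Ioo_subset_Icc_self hx))
    rw [h0, zero_sub, abs_neg] at h2
    exact h1.not_gt h2
  have hginj : Set.InjOn g (Set.Icc a b) := fun x hx y hy hxy => by
    by_contra hne
    rcases lt_or_gt_of_ne hne with h | h
    · exact hinj hg hg'ne hx hy h hxy
    · exact hinj hg hg'ne hy hx h hxy.symm
  have hgcont : ContinuousOn g (Set.Icc a b) :=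
    fun x hx => ((hg x (hsub hx)).continuousWithinAt).mono hsub
  have hqcont : ContinuousOn q (Set.Icc a b) :=
    fun x hx => ((hq x (hsub hx)).continuousWithinAt).mono hsub
  have haI : a ∈ Set.Icc a b := Set.left_mem_Icc.2 hab.le
  have hbI : b ∈ Set.Icc a b := Set.right_mem_Icc.2 hab.le
  have hxI := Set.Ioo_subset_Icc_self hxbar
  have hga := hlarge (hsub haI) (by simp)
  have hgb := hlarge (hsub hbI) (by simp)
  have hqa := abs_lt.1 (hqg a (hsub haI))
  have hqb := abs_lt.1 (hqg b (hsub hbI))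
  have hex : ∃ x ∈ Set.Icc a b, q x = 0 := by
    rcases hgcont.strictMonoOn_of_injOn_Icc' hab.le hginj with hmono | hanti
    · have h1 := hmono haI hxI hxbar.1
      have h2 := hmono hxI hbI hxbar.2
      rw [hgx] at h1 h2
      rw [abs_of_neg h1] at hga
      rw [abs_of_pos h2] at hgb
      exact intermediate_value_Icc hab.le hqcont ⟨by linarith [hqa.2], by linarith [hqb.1]⟩
    · have h1 := hanti haI hxI hxbar.1
      have h2 := hanti hxI hbI hxbar.2
      rw [hgx] at h1 h2
      rw [abs_of_pos h1] at hga
      rw [abs_of_neg h2] at hgb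
      exact intermediate_value_Icc' hab.le hqcont ⟨by linarith [hqb.2], by linarith [hqa.1]⟩
  have hzero {x : ℝ} (hx : x ∈ Set.Icc (-M) M) (h0 : q x = 0) : x ∈ Set.Icc a b := by
    by_contra hx'
    have h1 := hlarge hx fun h => hx' (Set.Ioo_subset_Icc_self h)
    have h2 := hqg x hx
    rw [h0, zero_sub, abs_neg] at h2
    exact h1.not_gt h2
  obtain ⟨x, hx, hx0⟩ := hex
  refine ⟨x, ⟨hsub hx, hx0⟩, fun y ⟨hy, hy0⟩ => ?_⟩
  by_contra hne
  rcases lt_or_gt_of_ne hne with h | h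
  · exact hinj hq hq'ne (hzero hy hy0) hx h (hy0.trans hx0.symm)
  · exact hinj hq hq'ne hx (hzero hy hy0) h (hx0.trans hy0.symm)

/-- Polynomial approximation of a quantitatively transverse family of pseudolines:
given a `C¹` family `f_1, …, f_m : [−M,M] × [0,1] → ℝ` of graphs crossing pairwise
exactly once (with `δ`-gap sets being intervals and slope gap `η` there), with
`f_i(0,0) = 0`, and the points `x_1, …, x_n` where at least two of the `f_i(·,1)`
agree, for every `ε > 0` there are real polynomials `p_i(x,t)` approximating `f_i`
and `∂f_i/∂x` within `min(δ/3, η/3, ε)` on the domain, with `p_i(0,0) = 0`,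
`p_i(x_k,1) = f_i(x_k,1)`, and such that for every `t` each pair `p_i(·,t), p_j(·,t)`
crosses exactly once in `[−M,M]`. -/
theorem polynomial_approximation_of_pseudoline_family
    (M δ η : ℝ) (hM : 1 ≤ M) (hδ : 0 < δ) (hη : 0 < η)
    (m : ℕ) (hm : 2 ≤ m)
    (f fx : ℕ → ℝ → ℝ → ℝ)
    (hsmooth : ∀ i < m, ContDiffOn ℝ 1 (fun q : ℝ × ℝ => f i q.1 q.2)
      (Set.Icc (-M) M ×ˢ Set.Icc (0 : ℝ) 1))
    (hfx : ∀ i < m, ∀ t ∈ Set.Icc (0 : ℝ) 1, ∀ x ∈ Set.Icc (-M) M,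
      HasDerivWithinAt (fun x' => f i x' t) (fx i x t) (Set.Icc (-M) M) x)
    (hf0 : ∀ i < m, f i 0 0 = 0)
    (hcross : ∀ t ∈ Set.Icc (0 : ℝ) 1, ∀ i < m, ∀ j < m, i ≠ j →
      ∃ xbar a b, -M < a ∧ a < b ∧ b < M ∧ xbar ∈ Set.Ioo a b ∧
        f i xbar t = f j xbar t ∧
        (∀ x ∈ Set.Icc (-M) M, f i x t = f j x t → x = xbar) ∧
        {x | x ∈ Set.Icc (-M) M ∧ |f i x t - f j x t| < δ} = Set.Ioo a b)
    (hslope : ∀ t ∈ Set.Icc (0 : ℝ) 1, ∀ i < m, ∀ j < m, i ≠ j →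
      ∀ x ∈ Set.Icc (-M) M, |f i x t - f j x t| < δ → η < |fx i x t - fx j x t|)
    (n : ℕ) (X : ℕ → ℝ)
    (hX : ∀ k < n, X k ∈ Set.Icc (-M) M)
    (hXchar : ∀ x ∈ Set.Icc (-M) M,
      ((∃ i < m, ∃ j < m, i ≠ j ∧ f i x 1 = f j x 1) ↔ ∃ k < n, x = X k)) :
    ∀ ε > 0, ∃ p : ℕ → MvPolynomial (Fin 2) ℝ,
      (∀ i < m, ∀ x ∈ Set.Icc (-M) M, ∀ t ∈ Set.Icc (0 : ℝ) 1,
        |MvPolynomial.eval ![x, t] (p i) - f i x t| < min (min (δ / 3) (η / 3)) ε ∧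
        |MvPolynomial.eval ![x, t] (MvPolynomial.pderiv 0 (p i)) - fx i x t|
          < min (min (δ / 3) (η / 3)) ε) ∧
      (∀ i < m, MvPolynomial.eval ![(0 : ℝ), 0] (p i) = 0) ∧
      (∀ i < m, ∀ k < n, MvPolynomial.eval ![X k, 1] (p i) = f i (X k) 1) ∧
      (∀ t ∈ Set.Icc (0 : ℝ) 1, ∀ i < m, ∀ j < m, i ≠ j →
        ∃! x, x ∈ Set.Icc (-M) M ∧
          MvPolynomial.eval ![x, t] (p i) = MvPolynomial.eval ![x, t] (p j)) := by
  intro ε hε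
  have hM0 : 0 < M := by linarith
  set e := min (min (δ / 3) (η / 3)) ε
  have he : 0 < e := by positivity
  have heδ : e ≤ δ / 3 := (min_le_left _ _).trans (min_le_left _ _)
  have heη : e ≤ η / 3 := (min_le_left _ _).trans (min_le_right _ _)
  have hex (i : ℕ) (hi : i < m) := exists_mvPolynomial_near_with_pderiv_interpolating hM0
    (hsmooth i hi) (hfx i hi) ((Finset.range n).image X) (by simpa using hX) he
  choose! p hp hp0 hpX using hex
  refine ⟨p, hp, fun i hi => (hp0 i hi).trans (hf0 i hi), fun i hi k hk =>
    hpX i hi _ (Finset.mem_image_of_mem X (Finset.mem_range.2 hk)), fun t ht i hi j hj hij => ?_⟩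
  obtain ⟨xbar, a, b, ha, -, hb, hxbar, hfeq, -, hset⟩ := hcross t ht i hi j hj hij
  have hunique := existsUnique_zero_of_near
    (fun x hx => (hfx i hi t ht x hx).sub (hfx j hj t ht x hx))
    (fun x _ => (((p i).hasDerivAt_eval_pderiv_zero x t).sub
      ((p j).hasDerivAt_eval_pderiv_zero x t)).hasDerivWithinAt)
    ha hb hxbar (sub_eq_zero.2 hfeq) hset (hslope t ht i hi j hj hij) hη
    (fun x hx => by
      have h1 := abs_lt.1 (hp i hi x hx t ht).1
      have h2 := abs_lt.1 (hp j hj x hx t ht).1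
      simp only [Pi.sub_apply]
      rw [abs_lt]
      constructor <;> linarith [h1.1, h1.2, h2.1, h2.2])
    (fun x hx => by
      have h1 := abs_lt.1 (hp i hi x hx t ht).2
      have h2 := abs_lt.1 (hp j hj x hx t ht).2
      rw [abs_lt]
      constructor <;> linarith [h1.1, h1.2, h2.1, h2.2])
  simpa only [Pi.sub_apply, sub_eq_zero] using hunique
end

section
/- Let m ≥ 3. For i = 1, …, m let a_i : ℂ → ℂ and b_i : ℂ → ℂ be analytic on a neighborhood of 0, and let c_i be analytic on a neighborhood of (0,0) in ℂ² with c_i(0, s) = 0 and ∂c_i/∂x (0, s) = 0 for all small s. For s near 0 define the curve C_i^s = { (x, y) ∈ ℂ² : y = a_i(s)·x + b_i(s) + c_i(x, s) }. Assume: the tangent slopes a₁(0), …, a_m(0) are pairwise distinct; b_i(0) = 0 for all i; b₁ ≡ 0 and b₂ ≡ 0 identically; and b_{i₀} is not identically zero for some i₀. Let r be the minimal order of vanishing at 0 among the functions b_i that are not identically zero (so 0 < r < ∞), write b_i(s) = s^r·b̄_i(s) with b̄_i analytic, and define the complex lines L_i = { (x, y) ∈ ℂ² : y = a_i(0)·x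 + b̄_i(0) }. Then: (1) the lines L₁, …, L_m are not all concurrent (L₁ and L₂ meet only at the origin, while some L_i does not pass through the origin); and (2) for every subset I ⊆ {1, …, m}, if there exist a sequence s_n → 0 with s_n ≠ 0 and points p_n ∈ ⋂_{i ∈ I} C_i^{s_n} with p_n → 0, then ⋂_{i ∈ I} L_i ≠ ∅. -/
open Filter

/-- An analytic function of two variables which vanishes to second order in `x` along `x = 0`
is `o(x)`, uniformly in the parameter. -/
lemma tendsto_div_fst_of_vanishing {c : ℂ × ℂ → ℂ} (hc : AnalyticAt ℂ c 0)
    (hv : ∀ᶠ s in nhds (0 : ℂ), c (0, s) = 0 ∧ deriv (fun x => c (x, s)) 0 = 0)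
    {x s : ℕ → ℂ} (hx : Tendsto x atTop (nhds 0)) (hs : Tendsto s atTop (nhds 0)) :
    Tendsto (fun n => c (x n, s n) / x n) atTop (nhds 0) := by
  have hD := hc.hasStrictFDerivAt
  have hpartial : ∀ u : ℂ, fderiv ℂ c 0 (u, 0) = 0 := by
    have h1 : HasFDerivAt c (fderiv ℂ c 0) ((0 : ℂ), (0 : ℂ)) := hD.hasFDerivAt
    have h2 : HasDerivAt (fun x : ℂ => (x, (0 : ℂ))) (1, 0) 0 :=
      (hasDerivAt_id (0 : ℂ)).prodMk (hasDerivAt_const 0 0)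
    have h3 : fderiv ℂ c 0 (1, 0) = 0 :=
      (HasFDerivAt.comp_hasDerivAt (f := fun x : ℂ => (x, (0 : ℂ))) 0 h1 h2).deriv.symm.trans hv.self_of_nhds.2
    intro u
    have h4 : ((u, 0) : ℂ × ℂ) = u • (1, 0) := by simp
    rw [h4, map_smul, h3, smul_zero]
  have hpair : Tendsto (fun n => ((x n, s n), ((0 : ℂ), s n))) atTop
      (nhds ((0 : ℂ × ℂ), (0 : ℂ × ℂ))) :=
    (hx.prodMk_nhds hs).prodMk_nhds (tendsto_const_nhds.prodMk_nhds hs)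
  have ho := hD.isLittleO.comp_tendsto hpair
  have ho' : (fun n => c (x n, s n)) =o[atTop] x := by
    refine (ho.congr' ?_ .rfl).trans_isBigO (.of_bound 1 (.of_forall fun n => ?_))
    · filter_upwards [hs.eventually hv] with n hn
      simp [hn.1, hpartial, -map_sub]
    · simp [Prod.norm_def]
  exact ho'.tendsto_div_nhds_zero

/-- If `b` vanishes near `0` and `b = s ^ r * f` there with `f` continuous, then `f 0 = 0`. -/
lemma eq_zero_of_pow_mul_eq_zero {b f : ℂ → ℂ} {r : ℕ} (hf : ContinuousAt f 0)
    (hb : ∀ᶠ s in nhds (0 : ℂ), b s = 0)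
    (hfact : ∀ᶠ s in nhds (0 : ℂ), b s = s ^ r * f s) : f 0 = 0 := by
  have h : ∀ᶠ s in nhdsWithin (0 : ℂ) {0}ᶜ, f s = 0 := by
    filter_upwards [nhdsWithin_le_nhds hb, nhdsWithin_le_nhds hfact, self_mem_nhdsWithin]
      with s h1 h2 h3
    rw [h1] at h2
    exact (mul_eq_zero.1 h2.symm).resolve_left (pow_ne_zero _ h3)
  exact tendsto_nhds_unique (hf.tendsto.mono_left nhdsWithin_le_nhds)
    (tendsto_const_nhds.congr' (h.mono fun _ hs => hs.symm))

/-- De Jong–van Straten degeneration lemma (analytic case): an analytic δ-constant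
deformation `C_i^s = {y = a_i(s)x + b_i(s) + c_i(x,s)}` of a plane curve germ with
smooth branches having pairwise distinct tangents, normalized so that the first two
branches always pass through the origin and not all deformed branches are concurrent
(encoded by `b_i(s) = s^r b̄_i(s)` with `r ≥ 1` minimal, i.e. `b̄_{i₀}(0) ≠ 0` for
some `i₀`), limits after rescaling to the complex lines
`L_i = {y = a_i(0)x + b̄_i(0)}`; these lines are not all concurrent (`L₁ ∩ L₂` is
exactly the origin and some `L_i` misses the origin), and they satisfy every
incidence relation persisting along the deformation. Branch `i+1` of the paper is
indexed here by `i < m`. -/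
theorem analytic_deformation_limit_lines
    (m : ℕ) (hm : 3 ≤ m)
    (a b bbar : ℕ → ℂ → ℂ) (c : ℕ → ℂ × ℂ → ℂ)
    (ha : ∀ i < m, AnalyticAt ℂ (a i) 0)
    (hb : ∀ i < m, AnalyticAt ℂ (b i) 0)
    (hbbar : ∀ i < m, AnalyticAt ℂ (bbar i) 0)
    (hc : ∀ i < m, AnalyticAt ℂ (c i) (0 : ℂ × ℂ))
    (hcvanish : ∀ i < m, ∀ᶠ s in nhds (0 : ℂ),
      c i (0, s) = 0 ∧ deriv (fun x => c i (x, s)) 0 = 0)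
    (hslopes : ∀ i < m, ∀ j < m, i ≠ j → a i 0 ≠ a j 0)
    (hb0 : ∀ i < m, b i 0 = 0)
    (hbfirst : ∀ᶠ s in nhds (0 : ℂ), b 0 s = 0)
    (hbsecond : ∀ᶠ s in nhds (0 : ℂ), b 1 s = 0)
    (hbnonzero : ∃ i₀ < m, ¬ (∀ᶠ s in nhds (0 : ℂ), b i₀ s = 0))
    (r : ℕ) (hr : 0 < r)
    (hfact : ∀ i < m, ∀ᶠ s in nhds (0 : ℂ), b i s = s ^ r * bbar i s)
    (hminimal : ∃ i₀ < m, bbar i₀ 0 ≠ 0)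
    (C : ℕ → ℂ → Set (ℂ × ℂ))
    (hC : ∀ i s, C i s = {q : ℂ × ℂ | q.2 = a i s * q.1 + b i s + c i (q.1, s)})
    (L : ℕ → Set (ℂ × ℂ))
    (hL : ∀ i, L i = {q : ℂ × ℂ | q.2 = a i 0 * q.1 + bbar i 0}) :
    (L 0 ∩ L 1 = {((0 : ℂ), (0 : ℂ))}) ∧
    (∃ i < m, ((0 : ℂ), (0 : ℂ)) ∉ L i) ∧
    (¬ ∃ z : ℂ × ℂ, ∀ i < m, z ∈ L i) ∧
    (∀ I : Finset ℕ, I ⊆ Finset.range m →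
      (∃ (s : ℕ → ℂ) (p : ℕ → ℂ × ℂ),
        Tendsto s atTop (nhds 0) ∧ (∀ n, s n ≠ 0) ∧
        Tendsto p atTop (nhds 0) ∧ (∀ n, ∀ i ∈ I, p n ∈ C i (s n))) →
      ∃ z : ℂ × ℂ, ∀ i ∈ I, z ∈ L i) := by
  have h0m : 0 < m := by omega
  have h1m : 1 < m := by omega
  have hbbar_zero : bbar 0 0 = 0 :=
    eq_zero_of_pow_mul_eq_zero (hbbar 0 h0m).continuousAt hbfirst (hfact 0 h0m)
  have hbbar_one : bbar 1 0 = 0 :=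
    eq_zero_of_pow_mul_eq_zero (hbbar 1 h1m).continuousAt hbsecond (hfact 1 h1m)
  have hinter : L 0 ∩ L 1 = {((0 : ℂ), (0 : ℂ))} := by
    ext ⟨x, y⟩
    simp only [hL, hbbar_zero, hbbar_one, Set.mem_inter_iff, Set.mem_ofPred_eq,
      Set.mem_singleton_iff, Prod.mk.injEq, add_zero]
    refine ⟨fun ⟨h1, h2⟩ => ?_, fun ⟨h1, h2⟩ => by simp [h1, h2]⟩
    have hx : x = 0 := by
      have h3 : (a 0 0 - a 1 0) * x = 0 := by linear_combination h2 - h1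
      exact (mul_eq_zero.1 h3).resolve_left (sub_ne_zero.2 (hslopes 0 h0m 1 h1m zero_ne_one))
    exact ⟨hx, by rw [h1, hx, mul_zero]⟩
  obtain ⟨i₀, hi₀, hne⟩ := hminimal
  have hmiss : ((0 : ℂ), (0 : ℂ)) ∉ L i₀ := by
    simpa [hL] using hne.symm
  refine ⟨hinter, ⟨i₀, hi₀, hmiss⟩, ?_, ?_⟩
  · rintro ⟨z, hz⟩
    have hz0 : z ∈ L 0 ∩ L 1 := ⟨hz 0 h0m, hz 1 h1m⟩
    rw [hinter, Set.mem_singleton_iff] at hz0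
    exact hmiss (hz0 ▸ hz i₀ hi₀)
  rintro I hI ⟨s, p, hs, hs0, hp, hmem⟩
  have hlt : ∀ i ∈ I, i < m := fun i hi => Finset.mem_range.1 (hI hi)
  have hx : Tendsto (fun n => (p n).1) atTop (nhds 0) := (continuous_fst.tendsto _).comp hp
  have he : ∀ i ∈ I, Tendsto (fun n => c i ((p n).1, s n) / (p n).1) atTop (nhds 0) :=
    fun i hi => tendsto_div_fst_of_vanishing (hc i (hlt i hi)) (hcvanish i (hlt i hi)) hx hs
  have hslope : ∀ i ∈ I, Tendsto (fun n => a i (s n) + c i ((p n).1, s n) / (p n).1) atTop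
      (nhds (a i 0)) := fun i hi => by
    simpa using ((ha i (hlt i hi)).continuousAt.tendsto.comp hs).add (he i hi)
  have hicpt : ∀ i ∈ I, Tendsto (fun n => bbar i (s n)) atTop (nhds (bbar i 0)) :=
    fun i hi => (hbbar i (hlt i hi)).continuousAt.tendsto.comp hs
  -- The rescaled points satisfy the equation of a line close to `L i`.
  have hresc : ∀ i ∈ I, ∀ᶠ n in atTop, (p n).2 / s n ^ r =
      (a i (s n) + c i ((p n).1, s n) / (p n).1) * ((p n).1 / s n ^ r) + bbar i (s n) := by
    intro i hi
    filter_upwards [hs.eventually (hfact i (hlt i hi)),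
      hs.eventually (hcvanish i (hlt i hi))] with n h1 h2
    have h3 := hmem n i hi
    rw [hC, Set.mem_ofPred_eq, h1] at h3
    have h4 : c i ((p n).1, s n) / (p n).1 * (p n).1 = c i ((p n).1, s n) := by
      by_cases h : (p n).1 = 0
      · rw [h, mul_zero, h2.1]
      · exact div_mul_cancel₀ _ h
    have h5 : s n ^ r ≠ 0 := pow_ne_zero _ (hs0 n)
    rw [← h4] at h3
    rw [h3, add_mul, add_div, add_div, mul_div_cancel_left₀ _ h5]
    ring
  by_cases hsub : ∀ i ∈ I, ∀ j ∈ I, i = j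
  · rcases I.eq_empty_or_nonempty with rfl | ⟨i, hi⟩
    · exact ⟨0, by simp⟩
    · refine ⟨(0, bbar i 0), fun j hj => ?_⟩
      rw [hsub j hj i hi, hL]
      simp
  push Not at hsub
  obtain ⟨i, hi, j, hj, hij⟩ := hsub
  have hden : a i 0 - a j 0 ≠ 0 := sub_ne_zero.2 (hslopes i (hlt i hi) j (hlt j hj) hij)
  have hdiff := (hslope i hi).sub (hslope j hj)
  have hxlim : Tendsto (fun n => (p n).1 / s n ^ r) atTop
      (nhds ((bbar j 0 - bbar i 0) / (a i 0 - a j 0))) := by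
    refine (((hicpt j hj).sub (hicpt i hi)).div hdiff hden).congr' ?_
    filter_upwards [hresc i hi, hresc j hj, hdiff.eventually_ne hden] with n h1 h2 h3
    rw [Pi.div_apply, div_eq_iff h3]
    linear_combination h1 - h2
  have hylim : ∀ k ∈ I, Tendsto (fun n => (p n).2 / s n ^ r) atTop
      (nhds (a k 0 * ((bbar j 0 - bbar i 0) / (a i 0 - a j 0)) + bbar k 0)) := fun k hk =>
    (((hslope k hk).mul hxlim).add (hicpt k hk)).congr' ((hresc k hk).mono fun _ h => h.symm)
  refine ⟨((bbar j 0 - bbar i 0) / (a i 0 - a j 0),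
    a i 0 * ((bbar j 0 - bbar i 0) / (a i 0 - a j 0)) + bbar i 0), fun k hk => ?_⟩
  rw [hL]
  exact tendsto_nhds_unique (hylim i hi) (hylim k hk)
end

section
/- Let m ≥ 3. For i = 1, …, m let f_i : ℂ × ℝ → ℂ be smooth functions of (x₁, x₂, t) (where x = x₁ + i·x₂), and for t ∈ [0, 1] define the curve C_i^t = { (x, y) ∈ ℂ² : y = f_i(x, t) }. Assume: f_i(0, 0) = 0 for all i; the real differential of x ↦ f_i(x, 0) at x = 0 is complex linear, given by multiplication by a_i ∈ ℂ, with a₁, …, a_m pairwise distinct; f₁(0, t) = 0 and f₂(0, t) = 0 for all t; and, setting b_i(t) = f_i(0, t), there exist an index k and an integer r ≥ 1 with dʳb_k/dtʳ (0) ≠ 0. Let r be minimal with this property over all indices, define β_i = (1/r!)·dʳb_i/dtʳ (0), and define the complex lines L_i = { (x, y) ∈ ℂ² : y = a_i·x + β_i }. Then: (1) the lines L₁, …, L_m are not all concurrent; and (2) for every subset I ⊆ {1, …, m}, if there exist a sequence t_n → 0 with t_n > 0 and points p_n ∈ ⋂_{i ∈ I} C_i^{t_n} with p_n → 0, then ⋂_{i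 ∈ I} L_i ≠ ∅. -/
open Filter Topology Asymptotics

/-- A smooth function vanishing to order `r` at `0` agrees with its leading Taylor term up to
`o(t ^ r)`. -/
theorem ContDiff.sub_leading_term_isLittleO {b : ℝ → ℂ} {r : ℕ} (hb : ContDiff ℝ r b)
    (h : ∀ j < r, iteratedDeriv j b 0 = 0) :
    (fun t : ℝ => b t - (r.factorial : ℂ)⁻¹ * iteratedDeriv r b 0 * (t : ℂ) ^ r)
      =o[𝓝 0] fun t : ℝ => (t : ℂ) ^ r := by
  have key := taylor_isLittleO_univ (x₀ := 0) hb
  simp only [taylor_within_apply, iteratedDerivWithin_univ, Finset.sum_range_succ, sub_zero] at key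
  refine (key.congr_left fun t => ?_).trans_isBigO (isBigO_of_le _ fun t => by simp)
  rw [Finset.sum_eq_zero fun j hj => by rw [h j (Finset.mem_range.mp hj), smul_zero], zero_add,
    Complex.real_smul]
  push_cast
  ring

/-- First-order expansion in `x` and leading-order expansion in `t` of a smooth `F (x, t)` whose
restriction to the `t`-axis vanishes to order `r`. -/
theorem ContDiff.sub_affine_isLittleO {F : ℂ × ℝ → ℂ} (hF : ContDiff ℝ (⊤ : ℕ∞) F) {a : ℂ}
    (ha : ∀ v : ℂ, fderiv ℝ (fun x => F (x, 0)) 0 v = a * v) {r : ℕ}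
    (h : ∀ j < r, iteratedDeriv j (fun t => F (0, t)) 0 = 0) :
    (fun q : ℂ × ℝ => F q - (a * q.1 +
        (r.factorial : ℂ)⁻¹ * iteratedDeriv r (fun t => F (0, t)) 0 * (q.2 : ℂ) ^ r))
      =o[𝓝 0] fun q : ℂ × ℝ => (q.1, (q.2 : ℂ) ^ r) := by
  have hstrict : HasStrictFDerivAt F (fderiv ℝ F 0) 0 :=
    hF.contDiffAt.hasStrictFDerivAt (by simp)
  have hpartial (v : ℂ) : fderiv ℝ F 0 (v, 0) = a * v := by
    have hcomp : HasFDerivAt (fun x : ℂ => F (x, 0))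
        ((fderiv ℝ F 0).comp (ContinuousLinearMap.inl ℝ ℂ ℝ)) 0 :=
      HasFDerivAt.comp (g := F) (f := fun x : ℂ => (x, (0 : ℝ))) (0 : ℂ)
        hstrict.hasFDerivAt (hasFDerivAt_prodMk_left 0 0)
    rw [← ha v, hcomp.fderiv]
    simp
  have hpair : Tendsto (fun q : ℂ × ℝ => (q, ((0 : ℂ), q.2))) (𝓝 0) (𝓝 (0, 0)) := by
    have : Continuous fun q : ℂ × ℝ => (q, ((0 : ℂ), q.2)) := by fun_prop
    exact this.tendsto' _ _ (by simp)
  have hsub (q : ℂ × ℝ) : q - (0, q.2) = (q.1, 0) := by ext <;> simp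
  have hx : (fun q : ℂ × ℝ => F q - F (0, q.2) - a * q.1)
      =o[𝓝 0] fun q : ℂ × ℝ => (q.1, (q.2 : ℂ) ^ r) := by
    refine ((hstrict.isLittleO.comp_tendsto hpair).congr_left fun q => ?_).trans_isBigO
      (isBigO_of_le _ fun q => ?_)
    · simp [← hpartial, -map_sub, hsub]
    · simp [hsub]
  have hb : ContDiff ℝ (⊤ : ℕ∞) fun t : ℝ => F (0, t) := hF.comp (by fun_prop)
  have ht := (hb.of_le (by exact_mod_cast le_top) : ContDiff ℝ r _).sub_leading_term_isLittleO h
  have ht' := (ht.comp_tendsto (continuous_snd.tendsto' (0 : ℂ × ℝ) 0 rfl)).trans_isBigO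
    (isBigO_snd_prod (f' := fun q : ℂ × ℝ => q.1))
  refine (hx.add ht').congr_left fun q => ?_
  simp only [Function.comp_apply]
  ring

/-- If a family of points `(x, y)` satisfies the line equations `y = a i * x + β i * s` up to
`o(|x| + |s|)`, where the slopes `a i` are distinct, then the lines `y = a i * x + β i`
have a common point. -/
theorem exists_common_point_of_isLittleO {α ι : Type*} {l : Filter α} [l.NeBot]
    {x y s : α → ℂ} (hs : ∀ n, s n ≠ 0) {I : Set ι} {a β : ι → ℂ}
    (ha : I.InjOn a)
    (h : ∀ i ∈ I, (fun n => y n - (a i * x n + β i * s n)) =o[l] fun n => (x n, s n)) :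
    ∃ z : ℂ × ℂ, ∀ i ∈ I, z.2 = a i * z.1 + β i := by
  rcases I.subsingleton_or_nontrivial with hI | ⟨i, hi, j, hj, hij⟩
  · rcases hI.eq_empty_or_singleton with rfl | ⟨i, rfl⟩
    · exact ⟨0, by simp⟩
    · exact ⟨(0, β i), by simp⟩
  have hne : a j - a i ≠ 0 := sub_ne_zero.mpr fun e => hij (ha hi hj e.symm)
  set u := (β i - β j) / (a j - a i) with hu
  have hd : (fun n => x n - u * s n) =o[l] fun n => (x n, s n) := by
    refine (((h i hi).sub (h j hj)).const_mul_left (a j - a i)⁻¹).congr_left fun n => ?_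
    rw [hu]
    field_simp
    ring
  have hbig : (fun n => (x n, s n)) =O[l] s := by
    have hd0 : (fun n => (x n - u * s n, (0 : ℂ))) =o[l] fun n => (x n, s n) :=
      hd.prod_left (isLittleO_zero _ _)
    refine hd0.right_isBigO_sub.trans ?_
    have : (fun n => (u * s n, s n)) =O[l] s :=
      ((isBigO_refl s l).const_mul_left u).prod_left (isBigO_refl s l)
    simpa using this
  refine ⟨(u, a i * u + β i), fun k hk => ?_⟩
  have hlim : (fun n => (a i * u + β i - (a k * u + β k)) * s n) =o[l] s := by
    refine ((((h k hk).sub (h i hi)).sub (hd.const_mul_left (a i - a k))).trans_isBigO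
      hbig).congr_left fun n => ?_
    ring
  have hzero := hlim.tendsto_div_nhds_zero
  simp only [mul_div_cancel_right₀ _ (hs _)] at hzero
  exact sub_eq_zero.mp (tendsto_nhds_unique tendsto_const_nhds hzero)


/-- Smooth ("small smooth deformation") version of the degeneration lemma: a smooth
graphical homotopy `C_i^t = {y = f_i(x, t)}` of the branches of a plane curve germ
with smooth branches whose complex tangents (multiplication by `a_i`) are pairwise
distinct, normalized so the first two branches always pass through the origin, and
satisfying the infinitesimal non-concurrence condition that some `b_k(t) = f_k(0,t)`
has a nonvanishing `t`-derivative of some order `r ≥ 1` at `0` (with `r` minimal over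
all indices), limits after rescaling to the complex lines `L_i = {y = a_i x + β_i}`
with `β_i = (1/r!)·dʳb_i/dtʳ(0)`; these lines are not all concurrent and satisfy
every incidence relation persisting along the homotopy. Branch `i+1` of the paper is
indexed here by `i < m`. -/
theorem smooth_deformation_limit_lines
    (m : ℕ) (hm : 3 ≤ m)
    (f : ℕ → ℂ → ℝ → ℂ)
    (hsmooth : ∀ i < m, ContDiff ℝ (⊤ : ℕ∞) (fun q : ℂ × ℝ => f i q.1 q.2))
    (hf00 : ∀ i < m, f i 0 0 = 0)
    (a : ℕ → ℂ)
    (hdiff : ∀ i < m, ∀ v : ℂ, fderiv ℝ (fun x => f i x 0) 0 v = a i * v)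
    (hslopes : ∀ i < m, ∀ j < m, i ≠ j → a i ≠ a j)
    (hfirst : ∀ t : ℝ, f 0 0 t = 0)
    (hsecond : ∀ t : ℝ, f 1 0 t = 0)
    (r : ℕ) (hr : 1 ≤ r)
    (hrex : ∃ k < m, iteratedDeriv r (fun t => f k 0 t) 0 ≠ 0)
    (hrmin : ∀ j, 1 ≤ j → j < r → ∀ k < m, iteratedDeriv j (fun t => f k 0 t) 0 = 0)
    (β : ℕ → ℂ)
    (hβ : ∀ i < m, β i = (r.factorial : ℂ)⁻¹ * iteratedDeriv r (fun t => f i 0 t) 0)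
    (C : ℕ → ℝ → Set (ℂ × ℂ))
    (hC : ∀ i t, C i t = {q : ℂ × ℂ | q.2 = f i q.1 t})
    (L : ℕ → Set (ℂ × ℂ))
    (hL : ∀ i, L i = {q : ℂ × ℂ | q.2 = a i * q.1 + β i}) :
    (¬ ∃ z : ℂ × ℂ, ∀ i < m, z ∈ L i) ∧
    (∀ I : Finset ℕ, I ⊆ Finset.range m →
      (∃ (t : ℕ → ℝ) (p : ℕ → ℂ × ℂ),
        Filter.Tendsto t Filter.atTop (nhds 0) ∧ (∀ n, 0 < t n) ∧
        Filter.Tendsto p Filter.atTop (nhds 0) ∧ (∀ n, ∀ i ∈ I, p n ∈ C i (t n))) →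
      ∃ z : ℂ × ℂ, ∀ i ∈ I, z ∈ L i) := by
  have h0 : 0 < m := by omega
  have h1 : 1 < m := by omega
  have hvanish (i : ℕ) (hi : i < m) (j : ℕ) (hj : j < r) :
      iteratedDeriv j (fun t => f i 0 t) 0 = 0 := by
    rcases Nat.eq_zero_or_pos j with rfl | hpos
    · simpa using hf00 i hi
    · exact hrmin j hpos hj i hi
  refine ⟨?_, ?_⟩
  · rintro ⟨z, hz⟩
    simp only [hL, Set.mem_ofPred_eq] at hz
    have hβ0 : β 0 = 0 := by rw [hβ 0 h0]; simp [hfirst]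
    have hβ1 : β 1 = 0 := by rw [hβ 1 h1]; simp [hsecond]
    have hz0 := hz 0 h0
    have hz1 := hz 1 h1
    rw [hβ0, add_zero] at hz0
    rw [hβ1, add_zero] at hz1
    have hzx : z.1 = 0 := by
      by_contra hne
      exact hslopes 0 h0 1 h1 zero_ne_one (mul_right_cancel₀ hne (hz0.symm.trans hz1))
    obtain ⟨k, hk, hkne⟩ := hrex
    have hzk := hz k hk
    rw [hz0, hzx, mul_zero, mul_zero, zero_add, hβ k hk] at hzk
    exact mul_ne_zero (inv_ne_zero (by exact_mod_cast r.factorial_ne_zero)) hkne hzk.symm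
  · rintro I hI ⟨t, p, ht, htpos, hp, hmem⟩
    have hlt (i : ℕ) (hi : i ∈ I) : i < m := Finset.mem_range.mp (hI hi)
    simp only [hC, Set.mem_ofPred_eq] at hmem
    simp only [hL, Set.mem_ofPred_eq]
    refine exists_common_point_of_isLittleO (l := atTop) (I := (I : Set ℕ))
      (x := fun n => (p n).1) (y := fun n => (p n).2) (s := fun n => (t n : ℂ) ^ r)
      (fun n => pow_ne_zero _ (by exact_mod_cast (htpos n).ne'))
      (fun i hi j hj hij => by_contra fun hne => hslopes i (hlt i hi) j (hlt j hj) hne hij)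
      fun i hi => ?_
    have hq : Tendsto (fun n => ((p n).1, t n)) atTop (𝓝 (0 : ℂ × ℝ)) :=
      ((continuous_fst.tendsto' (0 : ℂ × ℂ) 0 rfl).comp hp).prodMk_nhds ht
    refine (((hsmooth i (hlt i hi)).sub_affine_isLittleO (hdiff i (hlt i hi))
      (hvanish i (hlt i hi))).comp_tendsto hq).congr_left fun n => ?_
    simp only [Function.comp_apply]
    rw [hmem n i hi, hβ i (hlt i hi)]
end
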